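/- arXiv:2306.15293 — 3 statements merged into one kernel-verified Lean document; each statement's English description precedes it below -/
import Mathlib

section
/- Let n ≥ 2, let K, T ⊆ ℝⁿ be convex bodies, and let λ ∈ (0, 1) with λ ≠ 1/2. Then vol(λ∂K + (1−λ)∂T) · vol(λ∂T + (1−λ)∂K) = vol(K)·vol(T)·(1 − |1 − 2λ|ⁿ)² holds if and only if either K and T are translates of a common centrally-symmetric convex body (a body C with −C a translate of C), or n = 2 and K and T are translates of homothets (positive dilates) of a common centrally-symmetric convex body. -/
open MeasureTheory Pointwise

theorem Real.volume_add_le_of_smul_add_mem {a b : ℝ} (ha : 0 < a) (hb : 0 < b) {A B C : Set ℝ}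
    (hA : MeasurableSet A) (hB : MeasurableSet B) (hA0 : A.Nonempty) (hB0 : B.Nonempty)
    (hC : ∀ x ∈ A, ∀ y ∈ B, a * x + b * y ∈ C) :
    ENNReal.ofReal a * volume A + ENNReal.ofReal b * volume B ≤ volume C := by
  have compact_case : ∀ K L : Set ℝ, IsCompact K → IsCompact L → K ⊆ A → L ⊆ B → K.Nonempty →
      L.Nonempty → ENNReal.ofReal a * volume K + ENNReal.ofReal b * volume L ≤ volume C := by
    intro K L hK hL hKA hLB hK0 hL0
    obtain ⟨M, hMK, hM⟩ := hK.exists_isGreatest hK0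
    obtain ⟨m, hmL, hm⟩ := hL.exists_isLeast hL0
    have h1 : ENNReal.ofReal a * volume K = volume ((b * m) +ᵥ (a • K)) := by
      rw [measure_vadd, Measure.addHaar_smul]
      simp [abs_of_pos ha]
    have h2 : ENNReal.ofReal b * volume L = volume ((a * M) +ᵥ (b • L)) := by
      rw [measure_vadd, Measure.addHaar_smul]
      simp [abs_of_pos hb]
    have hmeas : MeasurableSet ((a * M) +ᵥ (b • L)) := ((hL.smul b).vadd _).measurableSet
    rw [h1, h2, ← measure_union₀ hmeas.nullMeasurableSet]
    · apply measure_mono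
      rintro _ (⟨_, ⟨x, hx, rfl⟩, rfl⟩ | ⟨_, ⟨x, hx, rfl⟩, rfl⟩)
      · have := hC x (hKA hx) m (hLB hmL)
        simpa [add_comm] using this
      · have := hC M (hKA hMK) x (hLB hx)
        simpa [add_comm] using this
    · refine measure_mono_null ?_ (measure_singleton (a * M + b * m))
      rintro _ ⟨⟨_, ⟨x, hx, rfl⟩, rfl⟩, ⟨_, ⟨y, hy, rfl⟩, h⟩⟩
      simp only [smul_eq_mul, vadd_eq_add, Set.mem_singleton_iff] at h ⊢
      nlinarith [mul_le_mul_of_nonneg_left (hM hx) ha.le, mul_le_mul_of_nonneg_left (hm hy) hb.le]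
  obtain ⟨x, hx⟩ := hA0
  obtain ⟨y, hy⟩ := hB0
  rw [hA.measure_eq_iSup_isCompact, hB.measure_eq_iSup_isCompact]
  simp only [ENNReal.mul_iSup]
  simp_rw [iSup_and']
  refine ENNReal.biSup_add_biSup_le' (p := fun K => K ⊆ A ∧ IsCompact K)
    (q := fun K => K ⊆ B ∧ IsCompact K) ⟨_, Set.empty_subset _, isCompact_empty⟩
    ⟨_, Set.empty_subset _, isCompact_empty⟩ fun K hK L hL => ?_
  refine le_trans ?_ (compact_case (insert x K) (insert y L) (hK.2.insert x) (hL.2.insert y)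
    (Set.insert_subset hx hK.1) (Set.insert_subset hy hL.1) (Set.insert_nonempty _ _)
    (Set.insert_nonempty _ _))
  gcongr <;> exact Set.subset_insert _ _

theorem Real.lintegral_ofReal_add_le_of_rpow_mul_rpow_le {a b : ℝ} (ha : 0 < a) (hb : 0 < b)
    (hab : a + b = 1) {f g h : ℝ → ℝ} (hf : Measurable f) (hg : Measurable g) (hh : Measurable h)
    (hf0 : ∀ x, 0 ≤ f x) (hg0 : ∀ x, 0 ≤ g x) (hh0 : ∀ x, 0 ≤ h x)
    (hf1 : ∀ x, f x ≤ 1) (hg1 : ∀ x, g x ≤ 1)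
    (hfs : ∀ t < 1, ∃ x, t < f x) (hgs : ∀ t < 1, ∃ x, t < g x)
    (hfgh : ∀ x y, f x ^ a * g y ^ b ≤ h (a * x + b * y)) :
    ENNReal.ofReal a * (∫⁻ x, ENNReal.ofReal (f x)) +
      ENNReal.ofReal b * (∫⁻ x, ENNReal.ofReal (g x)) ≤ ∫⁻ x, ENNReal.ofReal (h x) := by
  rw [lintegral_eq_lintegral_meas_lt _ (.of_forall hf0) hf.aemeasurable,
    lintegral_eq_lintegral_meas_lt _ (.of_forall hg0) hg.aemeasurable,
    lintegral_eq_lintegral_meas_lt _ (.of_forall hh0) hh.aemeasurable]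
  have anti : ∀ k : ℝ → ℝ, Measurable fun t => volume {x | t < k x} := fun k =>
    Antitone.measurable fun s t hst => measure_mono fun x (hx : t < k x) => hst.trans_lt hx
  rw [← lintegral_const_mul _ (anti f), ← lintegral_const_mul _ (anti g),
    ← lintegral_add_left ((anti f).const_mul _)]
  refine setLIntegral_mono' measurableSet_Ioi fun t (ht : 0 < t) => ?_
  rcases lt_or_ge t 1 with ht1 | ht1
  · refine Real.volume_add_le_of_smul_add_mem ha hb (measurableSet_lt measurable_const hf)
      (measurableSet_lt measurable_const hg) (hfs t ht1) (hgs t ht1) fun x hx y hy => ?_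
    refine lt_of_lt_of_le ?_ (hfgh x y)
    calc t = t ^ a * t ^ b := by rw [← Real.rpow_add ht, hab, Real.rpow_one]
      _ < f x ^ a * g y ^ b := by
        have hx' : t < f x := hx
        have hy' : t < g y := hy
        gcongr
  · have e1 : {x | t < f x} = ∅ := Set.eq_empty_of_forall_notMem fun x (hx : t < f x) =>
      (hx.trans_le (hf1 x)).not_ge ht1
    have e2 : {x | t < g x} = ∅ := Set.eq_empty_of_forall_notMem fun x (hx : t < g x) =>
      (hx.trans_le (hg1 x)).not_ge ht1
    simp [e1, e2]

theorem ENNReal.rpow_mul_rpow_le_add {a b : ℝ} (ha : 0 < a) (hb : 0 < b) (hab : a + b = 1)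
    (x y : ENNReal) : x ^ a * y ^ b ≤ ENNReal.ofReal a * x + ENNReal.ofReal b * y := by
  have hpq : (a⁻¹).HolderConjugate b⁻¹ :=
    Real.holderConjugate_iff.2 ⟨(one_lt_inv₀ ha).2 (by linarith), by simpa using hab⟩
  have h := ENNReal.young_inequality (x ^ a) (y ^ b) hpq
  rw [← ENNReal.rpow_mul, ← ENNReal.rpow_mul, mul_inv_cancel₀ ha.ne', mul_inv_cancel₀ hb.ne',
    ENNReal.rpow_one, ENNReal.rpow_one, ENNReal.ofReal_inv_of_pos ha,
    ENNReal.ofReal_inv_of_pos hb, div_eq_mul_inv, div_eq_mul_inv, inv_inv, inv_inv] at h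
  rwa [mul_comm x, mul_comm y] at h

theorem Real.prekopa_leindler_of_bounded {a b : ℝ} (ha : 0 < a) (hb : 0 < b) (hab : a + b = 1)
    {f g h : ℝ → ENNReal} (hf : Measurable f) (hg : Measurable g) (hh : Measurable h)
    (hfb : ⨆ x, f x ≠ ⊤) (hgb : ⨆ x, g x ≠ ⊤)
    (hfgh : ∀ x y, f x ^ a * g y ^ b ≤ h (a * x + b * y)) :
    (∫⁻ x, f x) ^ a * (∫⁻ x, g x) ^ b ≤ ∫⁻ x, h x := by
  set S := ⨆ x, f x with hS
  set R := ⨆ x, g x with hR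
  have hfS : ∀ x, f x ≤ S := le_iSup f
  have hgR : ∀ x, g x ≤ R := le_iSup g
  rcases eq_or_ne S 0 with hS0 | hS0
  · have : ∀ x, f x = 0 := fun x => le_zero_iff.1 (hS0 ▸ hfS x)
    simp [this, ha]
  rcases eq_or_ne R 0 with hR0 | hR0
  · have : ∀ x, g x = 0 := fun x => le_zero_iff.1 (hR0 ▸ hgR x)
    simp [this, hb]
  set D := S ^ a * R ^ b with hD
  have hSa0 : S ^ a ≠ 0 := by simp [hS0, hfb]
  have hSat : S ^ a ≠ ⊤ := ENNReal.rpow_ne_top_of_nonneg ha.le hfb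
  have hRb0 : R ^ b ≠ 0 := by simp [hR0, hgb]
  have hRbt : R ^ b ≠ ⊤ := ENNReal.rpow_ne_top_of_nonneg hb.le hgb
  have hD0 : D ≠ 0 := mul_ne_zero hSa0 hRb0
  have hDt : D ≠ ⊤ := ENNReal.mul_ne_top hSat hRbt
  have hf1 : ∀ x, f x / S ≤ 1 := fun x => ENNReal.div_le_of_le_mul (by simpa using hfS x)
  have hg1 : ∀ x, g x / R ≤ 1 := fun x => ENNReal.div_le_of_le_mul (by simpa using hgR x)
  have key := Real.lintegral_ofReal_add_le_of_rpow_mul_rpow_le ha hb hab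
    (f := fun x => (f x / S).toReal) (g := fun x => (g x / R).toReal)
    (h := fun x => (min (h x / D) 1).toReal)
    (hf.div_const _).ennreal_toReal (hg.div_const _).ennreal_toReal
    ((hh.div_const _).min measurable_const).ennreal_toReal
    (fun _ => ENNReal.toReal_nonneg) (fun _ => ENNReal.toReal_nonneg)
    (fun _ => ENNReal.toReal_nonneg)
    (fun x => ENNReal.toReal_mono ENNReal.one_ne_top (hf1 x))
    (fun x => ENNReal.toReal_mono ENNReal.one_ne_top (hg1 x)) ?_ ?_ ?_
  · have e1 : ∀ x, ENNReal.ofReal ((f x / S).toReal) = f x / S := fun x =>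
      ENNReal.ofReal_toReal ((hf1 x).trans_lt ENNReal.one_lt_top).ne
    have e2 : ∀ x, ENNReal.ofReal ((g x / R).toReal) = g x / R := fun x =>
      ENNReal.ofReal_toReal ((hg1 x).trans_lt ENNReal.one_lt_top).ne
    have e3 : ∀ x, ENNReal.ofReal ((min (h x / D) 1).toReal) ≤ h x / D := fun x =>
      ENNReal.ofReal_toReal_le.trans (min_le_left _ _)
    simp_rw [e1, e2] at key
    have key2 := key.trans (lintegral_mono e3)
    simp_rw [div_eq_mul_inv] at key2
    rw [lintegral_mul_const _ hf, lintegral_mul_const _ hg, lintegral_mul_const _ hh] at key2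
    have key3 := (ENNReal.rpow_mul_rpow_le_add ha hb hab _ _).trans key2
    rw [ENNReal.mul_rpow_of_nonneg _ _ ha.le, ENNReal.mul_rpow_of_nonneg _ _ hb.le,
      ENNReal.inv_rpow, ENNReal.inv_rpow, mul_mul_mul_comm,
      ← ENNReal.mul_inv (.inl hSa0) (.inl hSat), ← hD] at key3
    exact (ENNReal.mul_le_mul_iff_left (ENNReal.inv_ne_zero.2 hDt) (ENNReal.inv_ne_top.2 hD0)).1 key3
  · intro t ht
    rcases lt_or_ge t 0 with h0 | h0
    · exact ⟨0, h0.trans_le ENNReal.toReal_nonneg⟩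
    have : ENNReal.ofReal t * S < S := by
      conv_rhs => rw [← one_mul S]
      exact ENNReal.mul_lt_mul_left hS0 hfb (by simpa using ht)
    obtain ⟨x, hx⟩ := lt_iSup_iff.1 this
    refine ⟨x, ?_⟩
    rw [← ENNReal.ofReal_lt_iff_lt_toReal h0 ((hf1 x).trans_lt ENNReal.one_lt_top).ne]
    exact (ENNReal.lt_div_iff_mul_lt (.inl hS0) (.inl hfb)).2 hx
  · intro t ht
    rcases lt_or_ge t 0 with h0 | h0
    · exact ⟨0, h0.trans_le ENNReal.toReal_nonneg⟩
    have : ENNReal.ofReal t * R < R := by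
      conv_rhs => rw [← one_mul R]
      exact ENNReal.mul_lt_mul_left hR0 hgb (by simpa using ht)
    obtain ⟨x, hx⟩ := lt_iSup_iff.1 this
    refine ⟨x, ?_⟩
    rw [← ENNReal.ofReal_lt_iff_lt_toReal h0 ((hg1 x).trans_lt ENNReal.one_lt_top).ne]
    exact (ENNReal.lt_div_iff_mul_lt (.inl hR0) (.inl hgb)).2 hx
  · intro x y
    rw [ENNReal.toReal_rpow, ENNReal.toReal_rpow, ← ENNReal.toReal_mul]
    refine ENNReal.toReal_mono (ne_top_of_le_ne_top ENNReal.one_ne_top (min_le_right _ _))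
      (le_min ?_ ?_)
    · rw [div_eq_mul_inv, div_eq_mul_inv, div_eq_mul_inv, ENNReal.mul_rpow_of_nonneg _ _ ha.le,
        ENNReal.mul_rpow_of_nonneg _ _ hb.le, ENNReal.inv_rpow, ENNReal.inv_rpow,
        mul_mul_mul_comm, ← ENNReal.mul_inv (.inl hSa0) (.inl hSat)]
      gcongr
      exact hfgh x y
    · exact mul_le_one' (ENNReal.rpow_le_one (hf1 x) ha.le) (ENNReal.rpow_le_one (hg1 y) hb.le)

theorem Real.prekopa_leindler {a b : ℝ} (ha : 0 < a) (hb : 0 < b) (hab : a + b = 1)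
    {f g h : ℝ → ENNReal} (hf : Measurable f) (hg : Measurable g) (hh : Measurable h)
    (hfgh : ∀ x y, f x ^ a * g y ^ b ≤ h (a * x + b * y)) :
    (∫⁻ x, f x) ^ a * (∫⁻ x, g x) ^ b ≤ ∫⁻ x, h x := by
  rcases eq_or_ne (∫⁻ x, f x) 0 with hf0 | hf0
  · simp [hf0, ha]
  rcases eq_or_ne (∫⁻ x, g x) 0 with hg0 | hg0
  · simp [hg0, hb]
  have lim : ∀ k : ℝ → ENNReal, Measurable k → Filter.Tendsto
      (fun N : ℕ => ∫⁻ x, min (k x) N) Filter.atTop (nhds (∫⁻ x, k x)) := by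
    intro k hk
    refine lintegral_tendsto_of_tendsto_of_monotone
      (fun N => (hk.min measurable_const).aemeasurable)
      (.of_forall fun x N M hNM => min_le_min_left _ (by exact_mod_cast hNM))
      (.of_forall fun x => ?_)
    simpa using (tendsto_const_nhds (x := k x)).min ENNReal.tendsto_nat_nhds_top
  have bdd : ∀ (k : ℝ → ENNReal) (N : ℕ), ⨆ x, min (k x) N ≠ ⊤ := fun k N =>
    ne_top_of_le_ne_top (ENNReal.natCast_ne_top N) (iSup_le fun x => min_le_right _ _)
  refine le_of_tendsto (ENNReal.Tendsto.mul (((ENNReal.continuous_rpow_const).tendsto _).comp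
    (lim f hf)) (.inl ?_) (((ENNReal.continuous_rpow_const).tendsto _).comp (lim g hg)) (.inl ?_))
    (.of_forall fun N => Real.prekopa_leindler_of_bounded ha hb hab
      (hf.min measurable_const) (hg.min measurable_const) hh (bdd f N) (bdd g N)
      fun x y => le_trans ?_ (hfgh x y))
  · simp [hf0, ha, ha.le]
  · simp [hg0, hb, hb.le]
  · gcongr <;> exact min_le_left _ _

theorem prekopa_leindler_pi {a b : ℝ} (ha : 0 < a) (hb : 0 < b) (hab : a + b = 1) (n : ℕ)
    {f g h : (Fin n → ℝ) → ENNReal} (hf : Measurable f) (hg : Measurable g) (hh : Measurable h)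
    (hfgh : ∀ x y, f x ^ a * g y ^ b ≤ h (a • x + b • y)) :
    (∫⁻ x, f x) ^ a * (∫⁻ x, g x) ^ b ≤ ∫⁻ x, h x := by
  induction n with
  | zero =>
    simp_rw [volume_pi, Measure.pi_of_empty _ (0 : Fin 0 → ℝ)]
    rw [lintegral_dirac, lintegral_dirac, lintegral_dirac]
    convert hfgh 0 0 using 2
  | succ n ih =>
    let e := (MeasurableEquiv.piFinSuccAbove (fun _ : Fin (n + 1) => ℝ) 0).symm
    have he : MeasurePreserving e :=
      (volume_preserving_piFinSuccAbove (fun _ : Fin (n + 1) => ℝ) 0).symm _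
    have fub : ∀ k : (Fin (n + 1) → ℝ) → ENNReal, Measurable k →
        ∫⁻ x, k x = ∫⁻ s, ∫⁻ z, k (e (s, z)) := by
      intro k hk
      rw [← he.lintegral_comp hk, Measure.volume_eq_prod,
        lintegral_prod (fun z => k (e z)) (hk.comp e.measurable).aemeasurable]
    have elin : ∀ s t z w, e (a * s + b * t, a • z + b • w) = a • e (s, z) + b • e (t, w) := by
      intro s t z w
      ext i
      refine Fin.cases ?_ (fun j => ?_) i <;> simp [e, MeasurableEquiv.piFinSuccAbove]
    rw [fub f hf, fub g hg, fub h hh]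
    have meas : ∀ k : (Fin (n + 1) → ℝ) → ENNReal, Measurable k →
        Measurable fun s => ∫⁻ z, k (e (s, z)) := fun k hk =>
      (hk.comp e.measurable).lintegral_prod_right'
    refine Real.prekopa_leindler ha hb hab (meas f hf) (meas g hg) (meas h hh) fun s t => ?_
    have sec : ∀ (k : (Fin (n + 1) → ℝ) → ENNReal) (s : ℝ), Measurable k →
        Measurable fun z => k (e (s, z)) := fun k s hk =>
      hk.comp (e.measurable.comp measurable_prodMk_left)
    refine ih (sec f s hf) (sec g t hg) (sec h _ hh) fun z w => ?_
    rw [elin]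
    exact hfgh _ _

theorem prekopa_leindler {a b : ℝ} (ha : 0 < a) (hb : 0 < b) (hab : a + b = 1) (n : ℕ)
    {f g h : EuclideanSpace ℝ (Fin n) → ENNReal}
    (hf : Measurable f) (hg : Measurable g) (hh : Measurable h)
    (hfgh : ∀ x y, f x ^ a * g y ^ b ≤ h (a • x + b • y)) :
    (∫⁻ x, f x) ^ a * (∫⁻ x, g x) ^ b ≤ ∫⁻ x, h x := by
  have hm := PiLp.volume_preserving_toLp (Fin n)
  rw [← hm.lintegral_comp hf, ← hm.lintegral_comp hg, ← hm.lintegral_comp hh]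
  refine prekopa_leindler_pi ha hb hab n (hf.comp hm.measurable) (hg.comp hm.measurable)
    (hh.comp hm.measurable) fun x y => ?_
  simpa using hfgh (WithLp.toLp 2 x) (WithLp.toLp 2 y)

theorem prekopa_leindler_setIntegral {a b : ℝ} (ha : 0 < a) (hb : 0 < b) (hab : a + b = 1) {n : ℕ}
    {K T M : Set (EuclideanSpace ℝ (Fin n))} (hK : IsCompact K) (hT : IsCompact T)
    (hM : IsCompact M) {f g h : EuclideanSpace ℝ (Fin n) → ℝ} (hf : Continuous f)
    (hg : Continuous g) (hh : Continuous h) (hf0 : ∀ x ∈ K, 0 ≤ f x) (hg0 : ∀ x ∈ T, 0 ≤ g x)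
    (hh0 : ∀ x ∈ M, 0 ≤ h x) (hKTM : ∀ x ∈ K, ∀ y ∈ T, a • x + b • y ∈ M)
    (hfgh : ∀ x ∈ K, ∀ y ∈ T, f x ^ a * g y ^ b ≤ h (a • x + b • y)) :
    (∫ x in K, f x) ^ a * (∫ x in T, g x) ^ b ≤ ∫ x in M, h x := by
  have conv : ∀ (A : Set (EuclideanSpace ℝ (Fin n))) (k : EuclideanSpace ℝ (Fin n) → ℝ),
      IsCompact A → Continuous k → (∀ x ∈ A, 0 ≤ k x) →
      ENNReal.ofReal (∫ x in A, k x) = ∫⁻ x, A.indicator (fun x => ENNReal.ofReal (k x)) x := by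
    intro A k hA hk hk0
    rw [lintegral_indicator hA.measurableSet, ofReal_integral_eq_lintegral_ofReal
      (hk.continuousOn.integrableOn_compact hA) (ae_restrict_of_forall_mem hA.measurableSet hk0)]
  have meas : ∀ (A : Set (EuclideanSpace ℝ (Fin n))) (k : EuclideanSpace ℝ (Fin n) → ℝ),
      IsCompact A → Continuous k → Measurable (A.indicator (fun x => ENNReal.ofReal (k x))) :=
    fun A k hA hk => (ENNReal.measurable_ofReal.comp hk.measurable).indicator hA.measurableSet
  have iK : 0 ≤ ∫ x in K, f x := setIntegral_nonneg hK.measurableSet hf0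
  have iT : 0 ≤ ∫ x in T, g x := setIntegral_nonneg hT.measurableSet hg0
  have iM : 0 ≤ ∫ x in M, h x := setIntegral_nonneg hM.measurableSet hh0
  have key := prekopa_leindler ha hb hab n (meas K f hK hf) (meas T g hT hg) (meas M h hM hh) ?_
  · rw [← conv K f hK hf hf0, ← conv T g hT hg hg0, ← conv M h hM hh hh0,
      ENNReal.ofReal_rpow_of_nonneg iK ha.le, ENNReal.ofReal_rpow_of_nonneg iT hb.le,
      ← ENNReal.ofReal_mul (by positivity)] at key
    exact (ENNReal.ofReal_le_ofReal_iff iM).1 key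
  · intro x y
    by_cases hx : x ∈ K
    · by_cases hy : y ∈ T
      · rw [Set.indicator_of_mem hx, Set.indicator_of_mem hy, Set.indicator_of_mem (hKTM x hx y hy),
          ENNReal.ofReal_rpow_of_nonneg (hf0 x hx) ha.le,
          ENNReal.ofReal_rpow_of_nonneg (hg0 y hy) hb.le,
          ← ENNReal.ofReal_mul (Real.rpow_nonneg (hf0 x hx) _)]
        exact ENNReal.ofReal_le_ofReal (hfgh x hx y hy)
      · simp [hy, hb]
    · simp [hx, ha]

theorem weighted_add_le_of_eventually_rpow_mul_rpow_le {a b v A B C : ℝ} (ha : 0 < a) (hb : 0 < b)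
    (hab : a + b = 1) (hv : 0 < v)
    (h : ∀ᶠ s in nhdsWithin (0 : ℝ) (Set.Ioi 0), (v + s * B) ^ a * (v + s * C) ^ b ≤ v + s * A) :
    a * B + b * C ≤ A := by
  have pos : ∀ D : ℝ, ∀ᶠ s in nhdsWithin (0 : ℝ) (Set.Ioi 0), 0 < v + s * D := by
    intro D
    have : Filter.Tendsto (fun s : ℝ => v + s * D) (nhds 0) (nhds (v + 0 * D)) :=
      Continuous.tendsto (by fun_prop) 0
    exact (this.mono_left nhdsWithin_le_nhds).eventually (lt_mem_nhds (by simpa using hv))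
  have lim : Filter.Tendsto (fun s : ℝ => s * (B * C - A * (a * C + b * B)))
      (nhdsWithin (0 : ℝ) (Set.Ioi 0)) (nhds 0) := by
    have : Filter.Tendsto (fun s : ℝ => s * (B * C - A * (a * C + b * B))) (nhds 0)
      (nhds (0 * (B * C - A * (a * C + b * B)))) := Continuous.tendsto (by fun_prop) 0
    rw [zero_mul] at this
    exact this.mono_left nhdsWithin_le_nhds
  have fin : 0 ≤ v * (A - a * B - b * C) := by
    refine le_of_tendsto lim ?_
    filter_upwards [h, pos B, pos C, self_mem_nhdsWithin] with s hs hB hC hs0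
    have hs0 : 0 < s := hs0
    have hm := Real.geom_mean_le_arith_mean2_weighted ha.le hb.le (inv_nonneg.2 hB.le)
      (inv_nonneg.2 hC.le) hab
    rw [Real.inv_rpow hB.le, Real.inv_rpow hC.le, ← mul_inv] at hm
    have hG : 0 < (v + s * B) ^ a * (v + s * C) ^ b := by positivity
    have h1 : 1 ≤ (v + s * A) * (a * (v + s * B)⁻¹ + b * (v + s * C)⁻¹) := by
      calc (1 : ℝ) = ((v + s * B) ^ a * (v + s * C) ^ b) *
            ((v + s * B) ^ a * (v + s * C) ^ b)⁻¹ := (mul_inv_cancel₀ hG.ne').symm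
        _ ≤ _ := mul_le_mul hs hm (by positivity) (hG.le.trans hs)
    have h2 : (v + s * B) * (v + s * C) ≤
        (v + s * A) * (a * (v + s * C) + b * (v + s * B)) := by
      have := mul_le_mul_of_nonneg_right h1 (mul_pos hB hC).le
      have e : (v + s * A) * (a * (v + s * B)⁻¹ + b * (v + s * C)⁻¹) *
          ((v + s * B) * (v + s * C)) = (v + s * A) * (a * (v + s * C) + b * (v + s * B)) := by
        field_simp
      rwa [e, one_mul] at this
    have hbe : b = 1 - a := by linarith
    subst hbe
    refine le_of_mul_le_mul_left ?_ hs0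
    nlinarith [h2]
  have := (mul_nonneg_iff_of_pos_left hv).1 fin
  linarith

section Equality

variable {a b v : ℝ} {n : ℕ} {K T M : Set (EuclideanSpace ℝ (Fin n))}

theorem weighted_setIntegral_add_le_of_volume_eq (ha : 0 < a) (hb : 0 < b) (hab : a + b = 1)
    (hK : IsCompact K) (hT : IsCompact T) (hM : IsCompact M) (hv : 0 < v)
    (hKv : volume.real K = v) (hTv : volume.real T = v) (hMv : volume.real M = v)
    (hKTM : M = a • K + b • T) {f g h : EuclideanSpace ℝ (Fin n) → ℝ} (hf : Continuous f)
    (hg : Continuous g) (hh : Continuous h)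
    (hfgh : ∀ x ∈ K, ∀ y ∈ T, a * f x + b * g y ≤ h (a • x + b • y)) :
    a * (∫ x in K, f x) + b * (∫ x in T, g x) ≤ ∫ x in M, h x := by
  have mem : ∀ x ∈ K, ∀ y ∈ T, a • x + b • y ∈ M := fun x hx y hy => by
    rw [hKTM]
    exact Set.add_mem_add (Set.smul_mem_smul_set hx) (Set.smul_mem_smul_set hy)
  have ev : ∀ (A : Set (EuclideanSpace ℝ (Fin n))) (k : EuclideanSpace ℝ (Fin n) → ℝ),
      IsCompact A → Continuous k →
      ∀ᶠ s in nhdsWithin (0 : ℝ) (Set.Ioi 0), ∀ x ∈ A, 0 ≤ 1 + s * k x := by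
    intro A k hA hk
    obtain ⟨B, hB⟩ := hA.exists_bound_of_continuousOn hk.continuousOn
    have lim : Filter.Tendsto (fun s : ℝ => s * B) (nhds 0) (nhds (0 * B)) :=
      Continuous.tendsto (by fun_prop) 0
    rw [zero_mul] at lim
    filter_upwards [(lim.mono_left nhdsWithin_le_nhds).eventually (gt_mem_nhds one_pos),
      self_mem_nhdsWithin] with s hs hs0 x hx
    have hs0 : 0 < s := hs0
    have := (abs_le.1 (hB x hx)).1
    nlinarith
  have int : ∀ (A : Set (EuclideanSpace ℝ (Fin n))) (k : EuclideanSpace ℝ (Fin n) → ℝ) (s : ℝ),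
      IsCompact A → Continuous k → volume.real A = v →
      ∫ x in A, (1 + s * k x) = v + s * ∫ x in A, k x := by
    intro A k s hA hk hAv
    rw [integral_add (continuous_const.continuousOn.integrableOn_compact hA)
      ((by fun_prop : Continuous _).continuousOn.integrableOn_compact hA), integral_const_mul,
      setIntegral_const, hAv]
    simp
  refine weighted_add_le_of_eventually_rpow_mul_rpow_le ha hb hab hv ?_
  filter_upwards [ev K f hK hf, ev T g hT hg, ev M h hM hh, self_mem_nhdsWithin] with s h1 h2 h3 h4
  have h4 : 0 < s := h4
  rw [← int K f s hK hf hKv, ← int T g s hT hg hTv, ← int M h s hM hh hMv]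
  refine prekopa_leindler_setIntegral ha hb hab hK hT hM (by fun_prop) (by fun_prop) (by fun_prop)
    h1 h2 h3 mem fun x hx y hy => ?_
  refine (Real.geom_mean_le_arith_mean2_weighted ha.le hb.le (h1 x hx) (h2 y hy) hab).trans ?_
  nlinarith [mul_le_mul_of_nonneg_left (hfgh x hx y hy) h4.le]

theorem weighted_setIntegral_sq_add_le_of_volume_eq (ha : 0 < a) (hb : 0 < b) (hab : a + b = 1)
    (hK : IsCompact K) (hT : IsCompact T) (hM : IsCompact M) (hv : 0 < v)
    (hKv : volume.real K = v) (hTv : volume.real T = v) (hMv : volume.real M = v)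
    (hKTM : M = a • K + b • T) (u : EuclideanSpace ℝ (Fin n) →L[ℝ] ℝ)
    (hKu : ∫ x in K, u x = 0) (hTu : ∫ x in T, u x = 0) :
    a * (∫ x in K, u x ^ 2) + b * (∫ x in T, u x ^ 2) ≤ ∫ x in M, u x ^ 2 := by
  have mem : ∀ x ∈ K, ∀ y ∈ T, a • x + b • y ∈ M := fun x hx y hy => by
    rw [hKTM]
    exact Set.add_mem_add (Set.smul_mem_smul_set hx) (Set.smul_mem_smul_set hy)
  have hMu : ∫ x in M, u x = 0 := by
    have h1 := weighted_setIntegral_add_le_of_volume_eq ha hb hab hK hT hM hv hKv hTv hMv hKTM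
      u.continuous u.continuous u.continuous (fun x _ y _ => by simp)
    have h2 := weighted_setIntegral_add_le_of_volume_eq ha hb hab hK hT hM hv hKv hTv hMv hKTM
      (f := fun x => -u x)
      (g := fun x => -u x) (h := fun x => -u x) u.continuous.neg u.continuous.neg u.continuous.neg
      (fun x _ y _ => by simp)
    rw [hKu, hTu] at h1
    rw [integral_neg, integral_neg, integral_neg, hKu, hTu] at h2
    linarith
  have ev : ∀ A : Set (EuclideanSpace ℝ (Fin n)), IsCompact A →
      ∀ᶠ s in nhdsWithin (0 : ℝ) (Set.Ioi 0), ∀ x ∈ A, 0 ≤ 1 + √s * u x := by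
    intro A hA
    obtain ⟨B, hB⟩ := hA.exists_bound_of_continuousOn u.continuous.continuousOn
    have lim : Filter.Tendsto (fun s : ℝ => √s * B) (nhds 0) (nhds (√0 * B)) :=
      Continuous.tendsto (by fun_prop) 0
    rw [Real.sqrt_zero, zero_mul] at lim
    filter_upwards [(lim.mono_left nhdsWithin_le_nhds).eventually (gt_mem_nhds one_pos),
      self_mem_nhdsWithin] with s hs hs0 x hx
    have := (abs_le.1 (hB x hx)).1
    nlinarith [Real.sqrt_nonneg s]
  have int : ∀ (A : Set (EuclideanSpace ℝ (Fin n))) (s : ℝ), 0 < s → IsCompact A →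
      volume.real A = v → ∫ x in A, u x = 0 →
      ∫ x in A, (1 + √s * u x) ^ 2 = v + s * ∫ x in A, u x ^ 2 := by
    intro A s hs hA hAv hAu
    have e : ∀ x, (1 + √s * u x) ^ 2 = 1 + (2 * √s * u x + s * u x ^ 2) := fun x => by
      linear_combination (u x ^ 2) * Real.sq_sqrt hs.le
    have c := u.continuous
    simp_rw [e]
    rw [integral_add (continuous_const.continuousOn.integrableOn_compact hA)
      ((by fun_prop : Continuous _).continuousOn.integrableOn_compact hA),
      integral_add ((by fun_prop : Continuous _).continuousOn.integrableOn_compact hA)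
      ((by fun_prop : Continuous _).continuousOn.integrableOn_compact hA), integral_const_mul,
      integral_const_mul, setIntegral_const, hAv, hAu]
    simp
  refine weighted_add_le_of_eventually_rpow_mul_rpow_le ha hb hab hv ?_
  filter_upwards [ev K hK, ev T hT, ev M hM, self_mem_nhdsWithin] with s h1 h2 h3 h4
  rw [← int K s h4 hK hKv hKu, ← int T s h4 hT hTv hTu, ← int M s h4 hM hMv hMu]
  have c := u.continuous
  refine prekopa_leindler_setIntegral ha hb hab hK hT hM (by fun_prop) (by fun_prop) (by fun_prop)
    (fun _ _ => sq_nonneg _) (fun _ _ => sq_nonneg _) (fun _ _ => sq_nonneg _) mem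
    fun x hx y hy => ?_
  have h5 := Real.geom_mean_le_arith_mean2_weighted ha.le hb.le (h1 x hx) (h2 y hy) hab
  have h6 : 0 ≤ (1 + √s * u x) ^ a * (1 + √s * u y) ^ b :=
    mul_nonneg (Real.rpow_nonneg (h1 x hx) _) (Real.rpow_nonneg (h2 y hy) _)
  rw [← Real.rpow_natCast, ← Real.rpow_natCast, ← Real.rpow_mul (h1 x hx),
    ← Real.rpow_mul (h2 y hy), mul_comm _ a, mul_comm _ b, Real.rpow_mul (h1 x hx),
    Real.rpow_mul (h2 y hy), Real.rpow_natCast, Real.rpow_natCast, ← mul_pow]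
  refine pow_le_pow_left₀ h6 (h5.trans (le_of_eq ?_)) 2
  simp only [map_add, map_smul, smul_eq_mul]
  linear_combination hab

theorem ae_mem_of_volume_eq_of_centered (ha : 0 < a) (hb : 0 < b) (hab : a + b = 1)
    (hK : IsCompact K) (hT : IsCompact T) (hM : IsCompact M) (hv : 0 < v)
    (hKv : volume.real K = v) (hTv : volume.real T = v) (hMv : volume.real M = v)
    (hKTM : M = a • K + b • T) (hKu : ∀ i, ∫ x in K, x i = 0) (hTu : ∀ i, ∫ x in T, x i = 0) :
    ∀ᵐ x ∂volume.restrict K, x ∈ T := by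
  have hT0 : T.Nonempty := by
    rw [Set.nonempty_iff_ne_empty]
    rintro rfl
    simp at hTv
    linarith
  have hsq : a * (∫ x in K, ‖x‖ ^ 2) + b * (∫ x in T, ‖x‖ ^ 2) ≤ ∫ x in M, ‖x‖ ^ 2 := by
    have hsum : ∀ A : Set (EuclideanSpace ℝ (Fin n)), IsCompact A →
        ∫ x in A, ‖x‖ ^ 2 = ∑ i, ∫ x in A, (EuclideanSpace.proj i : _ →L[ℝ] ℝ) x ^ 2 := by
      intro A hA
      rw [← integral_finsetSum]
      · simp [EuclideanSpace.norm_sq_eq]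
      · intro i _
        have c := (EuclideanSpace.proj i : EuclideanSpace ℝ (Fin n) →L[ℝ] ℝ).continuous
        exact (c.pow 2).continuousOn.integrableOn_compact hA
    rw [hsum K hK, hsum T hT, hsum M hM, Finset.mul_sum, Finset.mul_sum, ← Finset.sum_add_distrib]
    exact Finset.sum_le_sum fun i _ => weighted_setIntegral_sq_add_le_of_volume_eq ha hb hab hK hT hM
      hv hKv hTv hMv hKTM (EuclideanSpace.proj i) (hKu i) (hTu i)
  set d : EuclideanSpace ℝ (Fin n) → ℝ := fun x => Metric.infDist x T with hd
  have hdc : Continuous d := Metric.continuous_infDist_pt T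
  have hTd : ∫ x in T, d x = 0 :=
    setIntegral_eq_zero_of_forall_eq_zero fun x hx => Metric.infDist_zero_of_mem hx
  have hKd0 : 0 ≤ ∫ x in K, d x := integral_nonneg fun x => Metric.infDist_nonneg
  have key : ∀ δ : ℝ, 0 < δ → δ * (∫ x in K, d x) ≤ δ ^ 2 * (v / (4 * (a * b))) := by
    intro δ hδ
    have h1 := weighted_setIntegral_add_le_of_volume_eq ha hb hab hK hT hM hv hKv hTv hMv hKTM
      (f := fun x => -‖x‖ ^ 2 + δ / a * d x) (g := fun x => -‖x‖ ^ 2 - δ / b * d x)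
      (h := fun x => -‖x‖ ^ 2 + δ ^ 2 / (4 * (a * b))) (by fun_prop) (by fun_prop) (by fun_prop) ?_
    · have i1 : ∀ A : Set (EuclideanSpace ℝ (Fin n)), IsCompact A →
          IntegrableOn (fun x => -‖x‖ ^ 2) A := fun A hA =>
        (by fun_prop : Continuous _).continuousOn.integrableOn_compact hA
      rw [integral_add (i1 K hK)
        ((by fun_prop : Continuous _).continuousOn.integrableOn_compact hK),
        integral_sub (i1 T hT)
        ((by fun_prop : Continuous _).continuousOn.integrableOn_compact hT),
        integral_add (i1 M hM)
        ((by fun_prop : Continuous _).continuousOn.integrableOn_compact hM),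
        integral_const_mul, integral_const_mul, hTd, setIntegral_const, hMv, integral_neg,
        integral_neg, integral_neg, smul_eq_mul] at h1
      have e : a * (δ / a * ∫ x in K, d x) = δ * ∫ x in K, d x := by field_simp
      have e2 : v * (δ ^ 2 / (4 * (a * b))) = δ ^ 2 * (v / (4 * (a * b))) := by ring
      nlinarith
    · intro x _ y _
      have hlip : d x ≤ d y + ‖x - y‖ := by
        rw [← dist_eq_norm]; exact Metric.infDist_le_infDist_add_dist
      have hn : ‖a • x + b • y‖ ^ 2 = a * ‖x‖ ^ 2 + b * ‖y‖ ^ 2 - a * b * ‖x - y‖ ^ 2 := by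
        rw [@norm_add_sq_real, @norm_sub_sq_real, norm_smul, norm_smul, inner_smul_left,
          inner_smul_right, mul_pow, mul_pow, Real.norm_eq_abs, Real.norm_eq_abs, sq_abs, sq_abs]
        have hbe : b = 1 - a := by linarith
        subst hbe
        simp only [conj_trivial]
        ring
      have e1 : a * (δ / a * d x) = δ * d x := by field_simp
      have e2 : b * (δ / b * d y) = δ * d y := by field_simp
      have hab0 : 0 < a * b := mul_pos ha hb
      have e3 : δ * ‖x - y‖ ≤ a * b * ‖x - y‖ ^ 2 + δ ^ 2 / (4 * (a * b)) := by
        have : a * b * ‖x - y‖ ^ 2 + δ ^ 2 / (4 * (a * b)) - δ * ‖x - y‖ =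
            (2 * (a * b) * ‖x - y‖ - δ) ^ 2 / (4 * (a * b)) := by
          field_simp
          ring
        have h0 : 0 ≤ (2 * (a * b) * ‖x - y‖ - δ) ^ 2 / (4 * (a * b)) := by positivity
        linarith
      have e4 := mul_le_mul_of_nonneg_left hlip hδ.le
      rw [hn]
      nlinarith
  have hzero : ∫ x in K, d x = 0 := by
    refine le_antisymm ?_ hKd0
    have lim : Filter.Tendsto (fun δ : ℝ => δ * (v / (4 * (a * b))))
        (nhdsWithin (0 : ℝ) (Set.Ioi 0)) (nhds 0) := by
      have : Filter.Tendsto (fun δ : ℝ => δ * (v / (4 * (a * b)))) (nhds 0)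
        (nhds (0 * (v / (4 * (a * b))))) := Continuous.tendsto (by fun_prop) 0
      rw [zero_mul] at this
      exact this.mono_left nhdsWithin_le_nhds
    refine ge_of_tendsto lim ?_
    filter_upwards [self_mem_nhdsWithin] with δ hδ
    have hδ : 0 < δ := hδ
    refine le_of_mul_le_mul_left ?_ hδ
    nlinarith [key δ hδ]
  have hae := (setIntegral_eq_zero_iff_of_nonneg_ae (.of_forall fun x => Metric.infDist_nonneg)
    (hdc.continuousOn.integrableOn_compact hK)).1 hzero
  filter_upwards [hae] with x hx
  exact (hT.isClosed.mem_iff_infDist_zero hT0).2 hx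

end Equality

theorem Convex.subset_of_volume_diff_eq_zero {n : ℕ} {A B : Set (EuclideanSpace ℝ (Fin n))}
    (hA : Convex ℝ A) (hAi : (interior A).Nonempty) (hB : IsClosed B)
    (h : volume (A \ B) = 0) : A ⊆ B := by
  have h1 : interior A \ B = ∅ := by
    rw [← (isOpen_interior.sdiff hB).measure_eq_zero_iff volume]
    exact measure_mono_null (Set.sdiff_subset_sdiff_left interior_subset) h
  calc A ⊆ closure A := subset_closure
    _ = closure (interior A) := (hA.closure_interior_eq_closure_of_nonempty_interior hAi).symm
    _ ⊆ B := closure_minimal (Set.sdiff_eq_empty.1 h1) hB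

theorem Convex.eq_of_subset_of_volume_le {n : ℕ} {A B : Set (EuclideanSpace ℝ (Fin n))}
    (hA : IsCompact A) (hB : IsCompact B) (hBc : Convex ℝ B) (hBi : (interior B).Nonempty)
    (hAB : A ⊆ B) (h : volume.real B ≤ volume.real A) : A = B := by
  refine hAB.antisymm (hBc.subset_of_volume_diff_eq_zero hBi hA.isClosed ?_)
  have h1 := measureReal_sdiff_add_inter (μ := volume) (s := B) hA.measurableSet
    hB.measure_lt_top.ne
  rw [Set.inter_eq_self_of_subset_right hAB] at h1
  have h2 : volume.real (B \ A) = 0 :=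
    le_antisymm (by linarith) measureReal_nonneg
  exact (measureReal_eq_zero_iff
    (measure_ne_top_of_subset Set.sdiff_subset hB.measure_lt_top.ne)).1 h2

theorem volume_real_smul {n : ℕ} (r : ℝ) (A : Set (EuclideanSpace ℝ (Fin n))) :
    volume.real (r • A) = |r| ^ n * volume.real A := by
  simp [Measure.real, Measure.addHaar_smul, abs_pow]

theorem volume_real_vadd {n : ℕ} (x : EuclideanSpace ℝ (Fin n))
    (A : Set (EuclideanSpace ℝ (Fin n))) : volume.real (x +ᵥ A) = volume.real A := by
  simp [Measure.real, measure_vadd]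

theorem setIntegral_vadd {n : ℕ} (c : EuclideanSpace ℝ (Fin n))
    (A : Set (EuclideanSpace ℝ (Fin n))) (f : EuclideanSpace ℝ (Fin n) → ℝ) :
    ∫ x in c +ᵥ A, f x = ∫ x in A, f (c + x) := by
  have := (measurePreserving_add_left volume c).setIntegral_image_emb
    (measurableEmbedding_addLeft c) f A
  simpa [← Set.image_vadd] using this

theorem exists_vadd_of_volume_weighted_add_eq {n : ℕ} {a b v : ℝ} (ha : 0 < a) (hb : 0 < b)
    (hab : a + b = 1) (hv : 0 < v) {K T : Set (EuclideanSpace ℝ (Fin n))}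
    (hK : IsCompact K) (hKc : Convex ℝ K) (hKi : (interior K).Nonempty)
    (hT : IsCompact T) (hTc : Convex ℝ T) (hTi : (interior T).Nonempty)
    (hKv : volume.real K = v) (hTv : volume.real T = v)
    (hMv : volume.real (a • K + b • T) = v) : ∃ z : EuclideanSpace ℝ (Fin n), T = z +ᵥ K := by
  have center : ∀ A : Set (EuclideanSpace ℝ (Fin n)), IsCompact A → volume.real A = v →
      ∃ c : EuclideanSpace ℝ (Fin n), ∀ i, ∫ x in c +ᵥ A, x i = 0 := by
    intro A hA hAv
    refine ⟨WithLp.toLp 2 fun i => -(v⁻¹ * ∫ x in A, x i), fun i => ?_⟩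
    rw [setIntegral_vadd]
    simp only [PiLp.add_apply]
    rw [integral_add (continuous_const.continuousOn.integrableOn_compact hA)
      ((by fun_prop : Continuous _).continuousOn.integrableOn_compact hA), setIntegral_const, hAv]
    simp only [smul_eq_mul]
    field_simp
    ring
  obtain ⟨c, hc⟩ := center K hK hKv
  obtain ⟨d, hd⟩ := center T hT hTv
  have hM : a • (c +ᵥ K) + b • (d +ᵥ T) = (a • c + b • d) +ᵥ (a • K + b • T) := by
    simp only [← Set.singleton_vadd, vadd_eq_add, smul_add, Set.smul_set_singleton,
      ← Set.singleton_add_singleton]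
    abel
  have hKcomp := hK.vadd c
  have hTcomp := hT.vadd d
  have hae := ae_mem_of_volume_eq_of_centered ha hb hab hKcomp hTcomp
    ((hKcomp.smul a).add (hTcomp.smul b)) hv (by rw [volume_real_vadd, hKv])
    (by rw [volume_real_vadd, hTv]) (by rw [hM, volume_real_vadd, hMv]) rfl hc hd
  have hKi' : (interior (c +ᵥ K)).Nonempty := by rw [interior_vadd]; exact hKi.vadd_set
  have hTi' : (interior (d +ᵥ T)).Nonempty := by rw [interior_vadd]; exact hTi.vadd_set
  have hsub : c +ᵥ K ⊆ d +ᵥ T := by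
    refine (hKc.vadd c).subset_of_volume_diff_eq_zero hKi' hTcomp.isClosed ?_
    rw [ae_restrict_iff' hKcomp.measurableSet] at hae
    refine measure_mono_null ?_ hae
    intro x hx h
    exact hx.2 (h hx.1)
  have heq := Convex.eq_of_subset_of_volume_le hKcomp hTcomp (hTc.vadd d) hTi' hsub
    (by rw [volume_real_vadd, volume_real_vadd, hKv, hTv])
  refine ⟨-d + c, ?_⟩
  rw [add_vadd, heq, ← add_vadd]
  simp

theorem one_le_volume_weighted_add {n : ℕ} {a b : ℝ} (ha : 0 < a) (hb : 0 < b)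
    (hab : a + b = 1) {K T : Set (EuclideanSpace ℝ (Fin n))} (hK : IsCompact K) (hT : IsCompact T)
    (hKv : volume.real K = 1) (hTv : volume.real T = 1) : 1 ≤ volume.real (a • K + b • T) := by
  have := prekopa_leindler_setIntegral ha hb hab hK hT ((hK.smul a).add (hT.smul b))
    (f := fun _ => 1) (g := fun _ => 1) (h := fun _ => 1) continuous_const continuous_const
    continuous_const (fun _ _ => zero_le_one) (fun _ _ => zero_le_one) (fun _ _ => zero_le_one)
    (fun x hx y hy => Set.add_mem_add (Set.smul_mem_smul_set hx) (Set.smul_mem_smul_set hy))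
    (fun x _ y _ => by simp)
  simpa [hKv, hTv] using this

section BrunnMinkowski

variable {n : ℕ} {α β : ℝ} {A B : Set (EuclideanSpace ℝ (Fin n))}

theorem inv_add_smul_add (hα : 0 < α) (hβ : 0 < β) :
    (α / (α + β)) • α⁻¹ • A + (β / (α + β)) • β⁻¹ • B = (α + β)⁻¹ • (A + B) := by
  rw [smul_smul, smul_smul, smul_add]
  congr 2 <;> field_simp

theorem volume_real_inv_smul (hα : 0 < α) (hA : α ^ n = volume.real A) :
    volume.real (α⁻¹ • A) = 1 := by
  rw [volume_real_smul, ← hA, abs_of_pos (inv_pos.2 hα), inv_pow]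
  exact inv_mul_cancel₀ (pow_pos hα n).ne'

theorem brunn_minkowski (hα : 0 < α) (hβ : 0 < β) (hA : IsCompact A) (hB : IsCompact B)
    (hAv : α ^ n = volume.real A) (hBv : β ^ n = volume.real B) :
    (α + β) ^ n ≤ volume.real (A + B) := by
  have h := one_le_volume_weighted_add (div_pos hα (add_pos hα hβ)) (div_pos hβ (add_pos hα hβ))
    (by field_simp) (hA.smul α⁻¹) (hB.smul β⁻¹) (volume_real_inv_smul hα hAv)
    (volume_real_inv_smul hβ hBv)
  have hs : 0 < α + β := add_pos hα hβ
  rwa [inv_add_smul_add hα hβ, volume_real_smul, abs_of_pos (inv_pos.2 hs), inv_pow,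
    ← div_eq_inv_mul, one_le_div (pow_pos hs n)] at h

theorem exists_homothety_of_brunn_minkowski_eq (hα : 0 < α) (hβ : 0 < β)
    (hA : IsCompact A) (hAc : Convex ℝ A) (hAi : (interior A).Nonempty)
    (hB : IsCompact B) (hBc : Convex ℝ B) (hBi : (interior B).Nonempty)
    (hAv : α ^ n = volume.real A) (hBv : β ^ n = volume.real B)
    (h : volume.real (A + B) = (α + β) ^ n) : ∃ z : EuclideanSpace ℝ (Fin n), B = z +ᵥ (β / α) • A := by
  have hs : 0 < α + β := add_pos hα hβ
  obtain ⟨z, hz⟩ := exists_vadd_of_volume_weighted_add_eq (div_pos hα hs) (div_pos hβ hs)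
    (by field_simp) one_pos (hA.smul α⁻¹) (hAc.smul α⁻¹)
    (by rw [interior_smul₀ (inv_ne_zero hα.ne')]; exact hAi.smul_set)
    (hB.smul β⁻¹) (hBc.smul β⁻¹)
    (by rw [interior_smul₀ (inv_ne_zero hβ.ne')]; exact hBi.smul_set)
    (volume_real_inv_smul hα hAv) (volume_real_inv_smul hβ hBv)
    (volume_real_inv_smul (A := A + B) hs h.symm ▸ by rw [inv_add_smul_add hα hβ])
  refine ⟨β • z, ?_⟩
  have : B = β • β⁻¹ • B := by rw [smul_smul, mul_inv_cancel₀ hβ.ne', one_smul]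
  rw [this, hz, ← Set.singleton_vadd, ← Set.singleton_vadd, vadd_eq_add, vadd_eq_add, smul_add,
    Set.smul_set_singleton, smul_smul, div_eq_mul_inv]

end BrunnMinkowski

section Frontier

variable {n : ℕ} {P Q R : Set (EuclideanSpace ℝ (Fin n))}

theorem IsCompact.isConnected_frontier_of_convex (hn : 2 ≤ n) (hP : IsCompact P)
    (hPc : Convex ℝ P) (hPi : (interior P).Nonempty) : IsConnected (frontier P) := by
  obtain ⟨e, -, -, he⟩ :=
    exists_homeomorph_image_interior_closure_frontier_eq_unitBall hPc hPi hP.isBounded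
  have hr : 1 < Module.rank ℝ (EuclideanSpace ℝ (Fin n)) := by
    rw [← Module.finrank_eq_rank, finrank_euclideanSpace_fin]
    exact_mod_cast hn
  rw [← e.isConnected_image, he]
  exact isConnected_sphere hr 0 zero_le_one

theorem IsCompact.subset_of_frontier_subset_of_isOpen {U : Set (EuclideanSpace ℝ (Fin n))}
    (hP : IsCompact P) (hU : IsOpen U) (hUc : Convex ℝ U) (hU0 : U.Nonempty)
    (h : frontier P ⊆ U) : P ⊆ U := by
  intro y hy
  by_contra hyU
  obtain ⟨l, hl⟩ := geometric_hahn_banach_open_point hUc hU hyU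
  obtain ⟨x, hx, hmax⟩ := hP.exists_isMaxOn ⟨y, hy⟩ l.continuous.continuousOn
  have hxU : x ∉ U := fun hxU => ((hl x hxU).trans_le (hmax hy)).false
  have hxi : x ∈ interior P := by
    by_contra hxi
    exact hxU (h ⟨subset_closure hx, hxi⟩)
  obtain ⟨r, hr⟩ := hU0
  have hloc : IsLocalMax l x :=
    Filter.eventually_of_mem (mem_interior_iff_mem_nhds.1 hxi) fun z hz => hmax hz
  have hl0 : l = 0 := by simpa using hloc.fderiv_eq_zero
  simpa [hl0] using hl r hr

theorem IsPreconnected.subset_interior_or_subset_compl {S : Set (EuclideanSpace ℝ (Fin n))}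
    (hS : IsPreconnected S) (h : Disjoint S (frontier R)) :
    S ⊆ interior R ∨ S ⊆ (closure R)ᶜ := by
  have hcover : S ⊆ interior R ∪ (closure R)ᶜ := by
    intro x hx
    by_cases hxc : x ∈ closure R
    · by_cases hxi : x ∈ interior R
      · exact .inl hxi
      · exact (Set.disjoint_left.1 h hx ⟨hxc, hxi⟩).elim
    · exact .inr hxc
  exact hS.subset_or_subset isOpen_interior isClosed_closure.isOpen_compl
    (disjoint_compl_right.mono_left (interior_subset.trans subset_closure)) hcover

theorem frontier_inter_frontier_nonempty (hn : 2 ≤ n)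
    (hP : IsCompact P) (hPc : Convex ℝ P) (hPi : (interior P).Nonempty)
    (hR : IsCompact R) (hRc : Convex ℝ R) (hRi : (interior R).Nonempty)
    (hPR : (P ∩ R).Nonempty) (h1 : ¬ R ⊆ interior P) (h2 : ¬ P ⊆ interior R) :
    (frontier P ∩ frontier R).Nonempty := by
  by_contra hd
  have hd : Disjoint (frontier P) (frontier R) :=
    Set.disjoint_iff_inter_eq_empty.2 (Set.not_nonempty_iff_eq_empty.1 hd)
  have cP := hP.isConnected_frontier_of_convex hn hPc hPi
  have cR := hR.isConnected_frontier_of_convex hn hRc hRi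
  rcases cP.isPreconnected.subset_interior_or_subset_compl hd with h | h
  · exact h2 (hP.subset_of_frontier_subset_of_isOpen isOpen_interior hRc.interior hRi h)
  rcases cR.isPreconnected.subset_interior_or_subset_compl hd.symm with h' | h'
  · exact h1 (hR.subset_of_frontier_subset_of_isOpen isOpen_interior hPc.interior hPi h')
  rw [hP.isClosed.closure_eq] at h'
  rw [hR.isClosed.closure_eq] at h
  have hdP : Disjoint P (frontier R) :=
    Set.disjoint_left.2 fun x hx hxR => h' hxR hx
  obtain ⟨x, hxP, hxR⟩ := hPR
  rcases hPc.isPreconnected.subset_interior_or_subset_compl hdP with h3 | h3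
  · exact h2 h3
  · exact h3 hxP (subset_closure hxR)

/-- The points `x` such that `x - Q` lies in the interior of `P`. -/
def interiorDiff (P Q : Set (EuclideanSpace ℝ (Fin n))) : Set (EuclideanSpace ℝ (Fin n)) :=
  {x | ∀ q ∈ Q, x - q ∈ interior P}

/-- The points `x` such that `x - Q` lies in `P`. -/
def minkowskiDiff (P Q : Set (EuclideanSpace ℝ (Fin n))) : Set (EuclideanSpace ℝ (Fin n)) :=
  {x | ∀ q ∈ Q, x - q ∈ P}

theorem isOpen_interiorDiff (hQ : IsCompact Q) : IsOpen (interiorDiff P Q) := by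
  have h : interiorDiff P Q = ((interior P)ᶜ + Q)ᶜ := by
    ext x
    simp only [interiorDiff, Set.mem_ofPred_eq, Set.mem_compl_iff, Set.mem_add, not_exists, not_and]
    constructor
    · rintro h y hy q hq rfl
      exact hy (by simpa using h q hq)
    · intro h q hq
      by_contra hx
      exact h _ hx q hq (by simp)
  rw [h]
  exact (isOpen_interior.isClosed_compl.add_right_of_isCompact hQ).isOpen_compl

theorem interiorDiff_subset_minkowskiDiff : interiorDiff P Q ⊆ minkowskiDiff P Q :=
  fun _ hx q hq => interior_subset (hx q hq)

theorem minkowskiDiff_subset_add (hQ0 : Q.Nonempty) : minkowskiDiff P Q ⊆ P + Q := by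
  obtain ⟨q, hq⟩ := hQ0
  exact fun x hx => ⟨x - q, hx q hq, q, hq, by simp⟩

theorem isCompact_minkowskiDiff (hP : IsCompact P) (hQ : IsCompact Q) (hQ0 : Q.Nonempty) :
    IsCompact (minkowskiDiff P Q) := by
  refine (hP.add hQ).of_isClosed_subset ?_ (minkowskiDiff_subset_add hQ0)
  have : minkowskiDiff P Q = ⋂ q ∈ Q, (fun x => x - q) ⁻¹' P := by
    ext x
    simp [minkowskiDiff]
  rw [this]
  exact isClosed_biInter fun q _ => hP.isClosed.preimage (by fun_prop)

theorem convex_minkowskiDiff (hPc : Convex ℝ P) : Convex ℝ (minkowskiDiff P Q) := by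
  intro x hx y hy s t hs ht hst q hq
  have := hPc (hx q hq) (hy q hq) hs ht hst
  convert this using 1
  rw [smul_sub, smul_sub, sub_add_sub_comm, ← add_smul, hst, one_smul]

theorem disjoint_frontier_add_frontier_interiorDiff (hQ : IsClosed Q) :
    Disjoint (frontier P + frontier Q) (interiorDiff P Q) := by
  rw [Set.disjoint_left]
  rintro _ ⟨p, hp, q, hq, rfl⟩ h
  exact hp.2 (by simpa using h q (hQ.frontier_subset hq))

theorem add_subset_frontier_add_frontier_union (hn : 2 ≤ n)
    (hP : IsCompact P) (hPc : Convex ℝ P) (hPi : (interior P).Nonempty)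
    (hQ : IsCompact Q) (hQc : Convex ℝ Q) (hQi : (interior Q).Nonempty) :
    P + Q ⊆ (frontier P + frontier Q) ∪ (interiorDiff P Q ∪ interiorDiff Q P) := by
  rintro _ ⟨p, hp, q, hq, rfl⟩
  set x := p + q with hx
  by_contra hcon
  simp only [Set.mem_union, not_or] at hcon
  obtain ⟨h0, h1, h2⟩ := hcon
  let e := Homeomorph.subLeft x
  have hsub : ∀ {A B : Set (EuclideanSpace ℝ (Fin n))}, e '' A ⊆ interior B →
      x ∈ interiorDiff B A := fun h a ha => h (Set.mem_image_of_mem e ha)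
  have hRc : Convex ℝ (e '' Q) := by
    have : e '' Q = x +ᵥ -Q := by
      rw [← Set.image_neg_eq_neg, ← Set.image_vadd, Set.image_image]
      simp [e, sub_eq_add_neg]
    rw [this]
    exact hQc.neg.vadd x
  have := frontier_inter_frontier_nonempty hn hP hPc hPi (hQ.image e.continuous) hRc
    (by rw [← e.image_interior]; exact hQi.image e) ⟨p, hp, q, hq, by simp [e, hx]⟩
    (fun h => h1 (hsub h)) (fun h => h2 ?_)
  · obtain ⟨y, hy, hy'⟩ := this
    rw [← e.image_frontier] at hy'
    obtain ⟨z, hz, rfl⟩ := hy'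
    exact h0 ⟨e z, hy, z, hz, by simp [e, hx]⟩
  · intro a ha
    have := h ha
    rw [← e.image_interior] at this
    obtain ⟨z, hz, hza⟩ := this
    have : x - a = z := by rw [← hza]; simp [e]
    rwa [this]

theorem volume_add_le_volume_frontier_add_frontier (hn : 2 ≤ n)
    (hP : IsCompact P) (hPc : Convex ℝ P) (hPi : (interior P).Nonempty)
    (hQ : IsCompact Q) (hQc : Convex ℝ Q) (hQi : (interior Q).Nonempty) :
    volume.real (P + Q) ≤ volume.real (frontier P + frontier Q) +
      (volume.real (interiorDiff P Q) + volume.real (interiorDiff Q P)) := by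
  have b : ∀ {A B : Set (EuclideanSpace ℝ (Fin n))}, IsCompact A → IsCompact B → B.Nonempty →
      volume (interiorDiff A B) ≠ ⊤ := fun hA hB hB0 =>
    measure_ne_top_of_subset interiorDiff_subset_minkowskiDiff
      (isCompact_minkowskiDiff hA hB hB0).measure_lt_top.ne
  have hb1 := b hP hQ (hQi.mono interior_subset)
  have hb2 := b hQ hP (hPi.mono interior_subset)
  have hb3 : volume (frontier P + frontier Q) ≠ ⊤ :=
    ((hP.of_isClosed_subset isClosed_frontier hP.isClosed.frontier_subset).add
      (hQ.of_isClosed_subset isClosed_frontier hQ.isClosed.frontier_subset)).measure_lt_top.ne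
  calc _ ≤ volume.real ((frontier P + frontier Q) ∪ (interiorDiff P Q ∪ interiorDiff Q P)) :=
        measureReal_mono (add_subset_frontier_add_frontier_union hn hP hPc hPi hQ hQc hQi)
          (measure_union_ne_top hb3 (measure_union_ne_top hb1 hb2))
    _ ≤ volume.real (frontier P + frontier Q) +
        volume.real (interiorDiff P Q ∪ interiorDiff Q P) := measureReal_union_le _ _
    _ ≤ _ := by gcongr; exact measureReal_union_le _ _

theorem volume_frontier_add_frontier_add_interiorDiff_le
    (hP : IsCompact P) (hQ : IsCompact Q) (hQ0 : Q.Nonempty) :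
    volume.real (frontier P + frontier Q) + volume.real (interiorDiff P Q) ≤
      volume.real (P + Q) := by
  have hPQ : volume (P + Q) ≠ ⊤ := (hP.add hQ).measure_lt_top.ne
  have h1 : frontier P + frontier Q ⊆ P + Q :=
    Set.add_subset_add hP.isClosed.frontier_subset hQ.isClosed.frontier_subset
  have h2 : interiorDiff P Q ⊆ P + Q :=
    interiorDiff_subset_minkowskiDiff.trans (minkowskiDiff_subset_add hQ0)
  rw [← measureReal_union (disjoint_frontier_add_frontier_interiorDiff hQ.isClosed)
    (isOpen_interiorDiff hQ).measurableSet (measure_ne_top_of_subset h1 hPQ)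
    (measure_ne_top_of_subset h2 hPQ)]
  exact measureReal_mono (Set.union_subset h1 h2) hPQ

end Frontier

section FrontierVolume

variable {n : ℕ} {P Q : Set (EuclideanSpace ℝ (Fin n))} {p q : ℝ}

theorem exists_pos_pow_eq_volume (hn : n ≠ 0) (hP : IsCompact P) (hPi : (interior P).Nonempty) :
    ∃ k, 0 < k ∧ k ^ n = volume.real P := by
  have h : 0 < volume.real P :=
    ENNReal.toReal_pos (Measure.measure_pos_of_nonempty_interior volume hPi).ne'
      hP.measure_lt_top.ne
  exact ⟨_, Real.rpow_pos_of_pos h (n : ℝ)⁻¹, Real.rpow_inv_natCast_pow h.le hn⟩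

theorem volume_real_neg (A : Set (EuclideanSpace ℝ (Fin n))) :
    volume.real (-A) = volume.real A := by
  simp [Measure.real]

theorem smul_vadd_set (r : ℝ) (x : EuclideanSpace ℝ (Fin n))
    (A : Set (EuclideanSpace ℝ (Fin n))) : r • (x +ᵥ A) = r • x +ᵥ r • A := by
  simp only [← Set.image_smul, ← Set.image_vadd, Set.image_image, vadd_eq_add, smul_add]

theorem minkowskiDiff_add_neg_subset : minkowskiDiff P Q + -Q ⊆ P := by
  rintro _ ⟨x, hx, y, hy, rfl⟩
  simpa using hx (-y) hy

theorem volume_interiorDiff_le_of_nonempty (hn : n ≠ 0) (hp : 0 < p) (hq : 0 < q)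
    (hP : IsCompact P) (hPc : Convex ℝ P) (hPi : (interior P).Nonempty)
    (hQ : IsCompact Q) (hQc : Convex ℝ Q) (hQi : (interior Q).Nonempty)
    (hPv : p ^ n = volume.real P) (hQv : q ^ n = volume.real Q)
    (hne : (interiorDiff P Q).Nonempty) :
    q < p ∧ volume.real (interiorDiff P Q) ≤ (p - q) ^ n ∧
      (volume.real (interiorDiff P Q) = (p - q) ^ n →
        ∃ z : EuclideanSpace ℝ (Fin n), P = z +ᵥ (p / q) • -Q) := by
  have hD := isCompact_minkowskiDiff hP hQ (hQi.mono interior_subset)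
  have hDc : Convex ℝ (minkowskiDiff P Q) := convex_minkowskiDiff hPc
  have hDi : (interior (minkowskiDiff P Q)).Nonempty :=
    hne.mono ((isOpen_interiorDiff hQ).subset_interior_iff.2 interiorDiff_subset_minkowskiDiff)
  obtain ⟨d, hd0, hd⟩ := exists_pos_pow_eq_volume hn hD hDi
  have hQv' : q ^ n = volume.real (-Q) := by rw [hQv, volume_real_neg]
  have h1 := brunn_minkowski hd0 hq hD hQ.neg hd hQv'
  have h2 : volume.real (minkowskiDiff P Q + -Q) ≤ p ^ n :=
    (measureReal_mono minkowskiDiff_add_neg_subset hP.measure_lt_top.ne).trans_eq hPv.symm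
  have h3 : d + q ≤ p := (pow_le_pow_iff_left₀ (by positivity) hp.le hn).1 (h1.trans h2)
  have h4 : volume.real (interiorDiff P Q) ≤ d ^ n :=
    (measureReal_mono interiorDiff_subset_minkowskiDiff hD.measure_lt_top.ne).trans_eq hd.symm
  refine ⟨by linarith, h4.trans (by gcongr; linarith), fun he => ?_⟩
  have h5 : p - q ≤ d :=
    (pow_le_pow_iff_left₀ (by linarith) hd0.le hn).1 (he.symm.trans_le h4)
  have hdpq : d = p - q := by linarith
  have hdq : q + d = p := by linarith
  have h6 : minkowskiDiff P Q + -Q = P := by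
    refine Convex.eq_of_subset_of_volume_le (hD.add hQ.neg) hP hPc hPi
      minkowskiDiff_add_neg_subset ?_
    rw [← hPv, ← hdq, add_comm q]
    exact h1
  obtain ⟨z, hz⟩ := exists_homothety_of_brunn_minkowski_eq hq hd0 hQ.neg hQc.neg
    ((Homeomorph.neg _).preimage_interior Q ▸ hQi.neg) hD hDc hDi hQv' hd
    (by rw [add_comm (-Q), h6, hdq, hPv])
  refine ⟨z, ?_⟩
  conv_lhs => rw [← h6, hz]
  have : p / q = d / q + 1 := by field_simp; linarith
  rw [this, hQc.neg.add_smul (by positivity) zero_le_one, one_smul, vadd_add_assoc]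

theorem volume_interiorDiff_add_le (hn : n ≠ 0) (hp : 0 < p) (hq : 0 < q)
    (hP : IsCompact P) (hPc : Convex ℝ P) (hPi : (interior P).Nonempty)
    (hQ : IsCompact Q) (hQc : Convex ℝ Q) (hQi : (interior Q).Nonempty)
    (hPv : p ^ n = volume.real P) (hQv : q ^ n = volume.real Q) :
    volume.real (interiorDiff P Q) + volume.real (interiorDiff Q P) ≤ |p - q| ^ n ∧
      (volume.real (interiorDiff P Q) + volume.real (interiorDiff Q P) = |p - q| ^ n → p ≠ q →
        (∃ z : EuclideanSpace ℝ (Fin n), P = z +ᵥ (p / q) • -Q) ∨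
        ∃ z : EuclideanSpace ℝ (Fin n), Q = z +ᵥ (q / p) • -P) := by
  have H1 := volume_interiorDiff_le_of_nonempty hn hp hq hP hPc hPi hQ hQc hQi hPv hQv
  have H2 := volume_interiorDiff_le_of_nonempty hn hq hp hQ hQc hQi hP hPc hPi hQv hPv
  rcases (interiorDiff P Q).eq_empty_or_nonempty with h1 | h1 <;>
  rcases (interiorDiff Q P).eq_empty_or_nonempty with h2 | h2
  · rw [h1, h2]
    simp only [measureReal_empty, add_zero]
    exact ⟨by positivity, fun h hpq =>
      absurd h (pow_pos (abs_pos.2 (sub_ne_zero.2 hpq)) n).ne⟩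
  · obtain ⟨h3, h4, h5⟩ := H2 h2
    rw [h1, measureReal_empty, zero_add, abs_sub_comm, abs_of_pos (sub_pos.2 h3)]
    exact ⟨h4, fun h _ => .inr (h5 h)⟩
  · obtain ⟨h3, h4, h5⟩ := H1 h1
    rw [h2, measureReal_empty, add_zero, abs_of_pos (sub_pos.2 h3)]
    exact ⟨h4, fun h _ => .inl (h5 h)⟩
  · exact absurd (H1 h1).1 (H2 h2).1.not_gt

theorem neg_eq_vadd_of_eq_vadd_smul_neg {r s : ℝ} (hr : r ≠ 0) (hs : s = r⁻¹)
    {w z : EuclideanSpace ℝ (Fin n)} (hQ : Q = w +ᵥ r • P)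
    (h : P = z +ᵥ s • -Q ∨ Q = z +ᵥ r • -P) :
    ∃ u : EuclideanSpace ℝ (Fin n), -P = u +ᵥ P := by
  subst hs
  have key : ∀ A : Set (EuclideanSpace ℝ (Fin n)), r⁻¹ • r • A = A := fun A =>
    inv_smul_smul₀ hr A
  rcases h with h | h
  · have h1 : P = (z + r⁻¹ • -w) +ᵥ -P := by
      conv_lhs => rw [h, hQ]
      ext x
      simp only [Set.mem_vadd_set_iff_neg_vadd_mem, Set.mem_neg, vadd_eq_add, inv_inv,
        Set.mem_smul_set_iff_inv_smul_mem₀ (inv_ne_zero hr), Set.mem_smul_set_iff_inv_smul_mem₀ hr]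
      congr! 1
      simp only [smul_add, smul_neg, smul_smul, inv_mul_cancel₀ hr, one_smul, neg_add, neg_neg]
      abel
    refine ⟨-(z + r⁻¹ • -w), ?_⟩
    conv_rhs => rw [h1]
    rw [neg_vadd_vadd]
  · refine ⟨r⁻¹ • (w - z), ?_⟩
    rw [hQ] at h
    have h1 : r • -P = (w - z) +ᵥ r • P := by
      rw [eq_comm, sub_eq_neg_add, ← vadd_vadd, h, neg_vadd_vadd]
    rw [← key (-P), h1, smul_vadd_set, key]

/-- A Brunn-Minkowski type inequality for boundaries of convex bodies. -/
theorem le_volume_frontier_add_frontier (hn : 2 ≤ n) (hp : 0 < p) (hq : 0 < q)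
    (hP : IsCompact P) (hPc : Convex ℝ P) (hPi : (interior P).Nonempty)
    (hQ : IsCompact Q) (hQc : Convex ℝ Q) (hQi : (interior Q).Nonempty)
    (hPv : p ^ n = volume.real P) (hQv : q ^ n = volume.real Q) :
    (p + q) ^ n - |p - q| ^ n ≤ volume.real (frontier P + frontier Q) := by
  have h1 := brunn_minkowski hp hq hP hQ hPv hQv
  have h2 := volume_add_le_volume_frontier_add_frontier hn hP hPc hPi hQ hQc hQi
  have h3 := (volume_interiorDiff_add_le (by lia) hp hq hP hPc hPi hQ hQc hQi hPv hQv).1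
  linarith

theorem exists_homothety_of_volume_frontier_add_frontier_eq
    (hn : 2 ≤ n) (hp : 0 < p) (hq : 0 < q)
    (hP : IsCompact P) (hPc : Convex ℝ P) (hPi : (interior P).Nonempty)
    (hQ : IsCompact Q) (hQc : Convex ℝ Q) (hQi : (interior Q).Nonempty)
    (hPv : p ^ n = volume.real P) (hQv : q ^ n = volume.real Q) (hpq : p ≠ q)
    (h : volume.real (frontier P + frontier Q) = (p + q) ^ n - |p - q| ^ n) :
    (∃ z : EuclideanSpace ℝ (Fin n), Q = z +ᵥ (q / p) • P) ∧
      ∃ w : EuclideanSpace ℝ (Fin n), -P = w +ᵥ P := by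
  have h1 := brunn_minkowski hp hq hP hQ hPv hQv
  have h2 := volume_add_le_volume_frontier_add_frontier hn hP hPc hPi hQ hQc hQi
  obtain ⟨h3, h4⟩ := volume_interiorDiff_add_le (by lia) hp hq hP hPc hPi hQ hQc hQi hPv hQv
  obtain ⟨z, hz⟩ := exists_homothety_of_brunn_minkowski_eq hp hq hP hPc hPi hQ hQc hQi hPv hQv
    (by linarith)
  refine ⟨⟨z, hz⟩, ?_⟩
  rcases h4 (by linarith) hpq with ⟨w, hw⟩ | ⟨w, hw⟩
  · exact neg_eq_vadd_of_eq_vadd_smul_neg (by positivity) (by simp) hz (.inl hw)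
  · exact neg_eq_vadd_of_eq_vadd_smul_neg (by positivity) rfl hz (.inr hw)

theorem vadd_smul_interior_subset_interiorDiff {C : Set (EuclideanSpace ℝ (Fin n))}
    (hCc : Convex ℝ C) {x y z : EuclideanSpace ℝ (Fin n)} {a b : ℝ} (hb : 0 < b) (hab : b < a)
    (hz : -C = z +ᵥ C) :
    (x + y - b • z) +ᵥ (a - b) • interior C ⊆ interiorDiff (x +ᵥ a • C) (y +ᵥ b • C) := by
  have ha : 0 < a := hb.trans hab
  rintro _ ⟨_, ⟨c, hc, rfl⟩, rfl⟩ _ ⟨_, ⟨d, hd, rfl⟩, rfl⟩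
  obtain ⟨e, he, hde⟩ : ∃ e ∈ C, z + e = -d := by
    have : -d ∈ z +ᵥ C := by rw [← hz]; simpa using hd
    simpa [Set.mem_vadd_set] using this
  have h1 : (1 - b / a) • c + (b / a) • e ∈ interior C :=
    hCc.combo_interior_self_mem_interior hc he (by rw [sub_pos, div_lt_one ha]; exact hab)
      (by positivity) (by ring)
  have h2 : x +ᵥ a • interior C = interior (x +ᵥ a • C) := by
    rw [interior_vadd, interior_smul₀ ha.ne']
  rw [← h2]
  refine ⟨_, ⟨_, h1, rfl⟩, ?_⟩
  have h3 : d = -(z + e) := by rw [hde, neg_neg]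
  have h4 : a * (1 - b / a) = a - b := by field_simp
  have h5 : a * (b / a) = b := by field_simp
  simp only [vadd_eq_add, smul_add, smul_smul, h3, h4, h5, smul_neg]
  abel

theorem volume_frontier_add_frontier_le_of_symmetric {C : Set (EuclideanSpace ℝ (Fin n))}
    (hC : IsCompact C) (hCc : Convex ℝ C) (hCi : (interior C).Nonempty)
    {x y z : EuclideanSpace ℝ (Fin n)} {a b : ℝ} (hb : 0 < b) (hab : b ≤ a)
    (hn : n ≠ 0) (hz : -C = z +ᵥ C) :
    volume.real (frontier (x +ᵥ a • C) + frontier (y +ᵥ b • C)) ≤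
      ((a + b) ^ n - |a - b| ^ n) * volume.real C := by
  have ha : 0 < a := hb.trans_le hab
  have hP : IsCompact (x +ᵥ a • C) := (hC.smul a).vadd x
  have hQ : IsCompact (y +ᵥ b • C) := (hC.smul b).vadd y
  have hC0 : C.Nonempty := hCi.mono interior_subset
  have hsum : (x +ᵥ a • C) + (y +ᵥ b • C) = (x + y) +ᵥ (a + b) • C := by
    rw [hCc.add_smul ha.le hb.le, vadd_add_assoc, add_vadd_comm, vadd_vadd]
  have h1 := volume_frontier_add_frontier_add_interiorDiff_le hP hQ
    (hC0.smul_set.vadd_set)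
  rw [hsum, volume_real_vadd, volume_real_smul, abs_of_pos (add_pos ha hb)] at h1
  rcases hab.eq_or_lt with rfl | hab
  · rw [sub_self, abs_zero, zero_pow hn, sub_zero]
    linarith [measureReal_nonneg (μ := volume) (s := interiorDiff (x +ᵥ b • C) (y +ᵥ b • C))]
  · have h2 := measureReal_mono (μ := volume)
      (vadd_smul_interior_subset_interiorDiff (x := x) (y := y) hCc hb hab hz)
      (measure_ne_top_of_subset interiorDiff_subset_minkowskiDiff
        (isCompact_minkowskiDiff hP hQ hC0.smul_set.vadd_set).measure_lt_top.ne)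
    have h3 : volume.real (interior C) = volume.real C :=
      measureReal_congr (interior_ae_eq_of_null_frontier (hCc.addHaar_frontier volume))
    rw [volume_real_vadd, volume_real_smul, h3] at h2
    linarith

theorem volume_frontier_add_frontier_of_symmetric {C : Set (EuclideanSpace ℝ (Fin n))}
    (hn : 2 ≤ n) (hC : IsCompact C) (hCc : Convex ℝ C) (hCi : (interior C).Nonempty)
    {x y z : EuclideanSpace ℝ (Fin n)} {a b : ℝ} (ha : 0 < a) (hb : 0 < b)
    (hz : -C = z +ᵥ C) :
    volume.real (frontier (x +ᵥ a • C) + frontier (y +ᵥ b • C)) =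
      ((a + b) ^ n - |a - b| ^ n) * volume.real C := by
  have hn0 : n ≠ 0 := by lia
  refine le_antisymm ?_ ?_
  · rcases le_total b a with h | h
    · exact volume_frontier_add_frontier_le_of_symmetric hC hCc hCi hb h hn0 hz
    · rw [add_comm, add_comm a, abs_sub_comm]
      exact volume_frontier_add_frontier_le_of_symmetric hC hCc hCi ha h hn0 hz
  · obtain ⟨c, hc0, hc⟩ := exists_pos_pow_eq_volume hn0 hC hCi
    have hi : ∀ (u : EuclideanSpace ℝ (Fin n)) {r : ℝ}, 0 < r →
        (interior (u +ᵥ r • C)).Nonempty := fun u r hr => by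
      rw [interior_vadd, interior_smul₀ hr.ne']
      exact hCi.smul_set.vadd_set
    have hv : ∀ (u : EuclideanSpace ℝ (Fin n)) {r : ℝ}, 0 < r →
        (r * c) ^ n = volume.real (u +ᵥ r • C) := fun u r hr => by
      rw [volume_real_vadd, volume_real_smul, abs_of_pos hr, mul_pow, hc]
    have := le_volume_frontier_add_frontier hn (mul_pos ha hc0) (mul_pos hb hc0)
      ((hC.smul a).vadd x) ((hCc.smul a).vadd x) (hi x ha)
      ((hC.smul b).vadd y) ((hCc.smul b).vadd y) (hi y hb) (hv x ha) (hv y hb)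
    rwa [← add_mul, ← sub_mul, abs_mul, abs_of_pos hc0, mul_pow, mul_pow, hc, ← sub_mul] at this

end FrontierVolume

section Numeric

variable {n : ℕ} {a b k t : ℝ}

theorem pow_sub_pow_le_pow_sub_pow_of_sq_sub_sq_eq {u v u' v' : ℝ} (hn : 2 ≤ n) (hv : 0 ≤ v)
    (hvu : v ≤ u) (hvv : v ≤ v') (hvu' : v' ≤ u') (huu : u ≤ u')
    (h : u ^ 2 - v ^ 2 = u' ^ 2 - v' ^ 2) : u ^ n - v ^ n ≤ u' ^ n - v' ^ n := by
  obtain ⟨m, rfl⟩ := Nat.exists_eq_add_of_le' hn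
  have hu : 0 ≤ u := hv.trans hvu
  have hv' : 0 ≤ v' := hv.trans hvv
  have hu' : 0 ≤ u' := hv'.trans hvu'
  have he : 0 ≤ v' ^ 2 - v ^ 2 := by nlinarith
  clear hn
  induction m using Nat.twoStepInduction with
  | zero => exact h.le
  | one =>
    obtain ⟨s, hs, rfl⟩ : ∃ s, 0 ≤ s ∧ u' = v' + s := ⟨u' - v', by linarith, by ring⟩
    obtain ⟨r, hr, rfl⟩ : ∃ r, 0 ≤ r ∧ u = v + r := ⟨u - v, by linarith, by ring⟩
    rcases (add_nonneg hv' hv).eq_or_lt with h0 | h0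
    · have hv0 : v = 0 := by linarith
      have hv0' : v' = 0 := by linarith
      subst hv0 hv0'
      have := pow_le_pow_left₀ hu huu 3
      simpa using this
    have h1 : (v' ^ 2 + v' * v + v ^ 2) * (v' + s + (v + r)) ≤
        ((v' + s) ^ 2 + (v' + s) * (v + r) + (v + r) ^ 2) * (v' + v) := by
      have : 0 ≤ s * v' ^ 2 + 2 * s * v' * v + r * v ^ 2 + 2 * r * v' * v +
        (s ^ 2 + s * r + r ^ 2) * (v' + v) := by positivity
      nlinarith
    have h2 : 0 < v' + s + (v + r) := by linarith
    have h3 : (v' ^ 3 - v ^ 3) * (v' + v) = (v' ^ 2 - v ^ 2) * (v' ^ 2 + v' * v + v ^ 2) := by ring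
    have h4 : ((v' + s) ^ 3 - (v + r) ^ 3) * (v' + s + (v + r)) =
        (v' ^ 2 - v ^ 2) * ((v' + s) ^ 2 + (v' + s) * (v + r) + (v + r) ^ 2) := by
      rw [show v' ^ 2 - v ^ 2 = (v' + s) ^ 2 - (v + r) ^ 2 by linarith]
      ring
    have h5 : (v' ^ 3 - v ^ 3) ≤ ((v' + s) ^ 3 - (v + r) ^ 3) := by
      rw [← mul_le_mul_iff_of_pos_right (mul_pos h0 h2)]
      calc (v' ^ 3 - v ^ 3) * ((v' + v) * (v' + s + (v + r)))
          = (v' ^ 2 - v ^ 2) * ((v' ^ 2 + v' * v + v ^ 2) * (v' + s + (v + r))) := by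
            rw [← mul_assoc, h3, mul_assoc]
        _ ≤ (v' ^ 2 - v ^ 2) *
            (((v' + s) ^ 2 + (v' + s) * (v + r) + (v + r) ^ 2) * (v' + v)) := by gcongr
        _ = _ := by rw [← mul_assoc, ← h4]; ring
    simp only [Nat.reduceAdd]
    linarith
  | more m ih _ =>
    have h1 : v ^ (m + 2) ≤ u ^ (m + 2) := by gcongr
    have h2 : v' ^ (m + 2) - v ^ (m + 2) ≤ u' ^ (m + 2) - u ^ (m + 2) := by linarith
    have h3 : 0 ≤ v' ^ (m + 2) - v ^ (m + 2) := sub_nonneg.2 (by gcongr)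
    have h4 : v' ^ 2 * (v' ^ (m + 2) - v ^ (m + 2)) ≤ u' ^ 2 * (u' ^ (m + 2) - u ^ (m + 2)) := by
      gcongr
    have h5 := mul_le_mul_of_nonneg_right h1 he
    have h6 : u' ^ 2 - u ^ 2 = v' ^ 2 - v ^ 2 := by linarith
    have h7 : u' ^ (m + 2 + 2) - u ^ (m + 2 + 2) =
      u' ^ 2 * (u' ^ (m + 2) - u ^ (m + 2)) + u ^ (m + 2) * (v' ^ 2 - v ^ 2) := by
      rw [← h6]; ring
    have h8 : v' ^ (m + 2 + 2) - v ^ (m + 2 + 2) =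
      v' ^ 2 * (v' ^ (m + 2) - v ^ (m + 2)) + v ^ (m + 2) * (v' ^ 2 - v ^ 2) := by ring
    linarith

theorem pow_add_pow_le_of_sq_eq {B M E : ℝ} (h : B ^ 2 = E ^ 2 + M ^ 2) {j : ℕ} (hj : Even j)
    (hj0 : j ≠ 0) : E ^ j + M ^ j ≤ B ^ j := by
  obtain ⟨i, rfl⟩ := hj.two_dvd
  rw [pow_mul, pow_mul, pow_mul, h]
  exact pow_add_pow_le (sq_nonneg E) (sq_nonneg M) (by lia)

theorem add_pow_add_sub_pow (x y : ℝ) (n : ℕ) : (x + y) ^ n + (x - y) ^ n =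
    ∑ j ∈ Finset.range (n + 1), n.choose j * (1 + (-1) ^ j) * (x ^ (n - j) * y ^ j) := by
  rw [add_comm x, sub_eq_neg_add, add_pow, add_pow, ← Finset.sum_add_distrib]
  refine Finset.sum_congr rfl fun j _ => ?_
  rw [neg_pow]
  ring

theorem add_pow_add_sub_pow_sub_lt {A B C E M : ℝ} (hn : 3 ≤ n) (hA : 0 ≤ A) (hC : 0 ≤ C)
    (hE : E ≠ 0) (hM : M ≠ 0) (hAC : A ^ 2 = C ^ 2 + M ^ 2) (hBE : B ^ 2 = E ^ 2 + M ^ 2) :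
    (A + M) ^ n + (A - M) ^ n - 2 * C ^ n <
      (A + B) ^ n + (A - B) ^ n - ((C + E) ^ n + (C - E) ^ n) := by
  have h0 : 2 * C ^ n = (C + 0) ^ n + (C - 0) ^ n := by ring
  rw [h0]
  simp only [add_pow_add_sub_pow, ← Finset.sum_sub_distrib, ← mul_sub]
  have hCA : C < A := lt_of_pow_lt_pow_left₀ 2 hA (by rw [hAC]; have := sq_pos_of_ne_zero hM; linarith)
  refine Finset.sum_lt_sum (fun j _ => ?_) ⟨2, by simp; lia, ?_⟩
  · rcases j.even_or_odd with hj | hj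
    · refine mul_le_mul_of_nonneg_left ?_ (by rw [hj.neg_one_pow]; positivity)
      rcases eq_or_ne j 0 with rfl | hj0
      · simp
      · have h1 := pow_add_pow_le_of_sq_eq hBE hj hj0
        have h2 : C ^ (n - j) ≤ A ^ (n - j) := by gcongr
        have h3 : 0 ≤ E ^ j := hj.pow_nonneg E
        have h4 : 0 ≤ A ^ (n - j) := by positivity
        rw [zero_pow hj0]
        nlinarith
    · simp [hj.neg_one_pow]
  · have h1 : C ^ (n - 2) < A ^ (n - 2) := pow_lt_pow_left₀ hCA hC (by lia)
    have h2 : 0 < E ^ 2 := by positivity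
    have h3 : (0 : ℝ) < n.choose 2 := by exact_mod_cast Nat.choose_pos (by lia)
    refine mul_lt_mul_of_pos_left ?_ (by positivity)
    rw [hBE]
    nlinarith

theorem mul_sq_lt_of_mul_le_mul (hn : 3 ≤ n) (hb : 0 < b) (hab : b < a) (ht : 0 < t) (hkt : t < k)
    (h : b * k ≤ a * t) :
    (k * t) ^ n * ((a + b) ^ n - (a - b) ^ n) ^ 2 <
      ((a * k + b * t) ^ n - |a * k - b * t| ^ n) * ((a * t + b * k) ^ n - |a * t - b * k| ^ n) := by
  have ha := hb.trans hab
  have hk := ht.trans hkt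
  have h1 : b * t ≤ a * k := by gcongr
  rw [abs_of_nonneg (sub_nonneg.2 h), abs_of_nonneg (sub_nonneg.2 h1)]
  have h2 : 0 < k ^ 2 - t ^ 2 := by nlinarith
  have h3 : 0 < a ^ 2 - b ^ 2 := by nlinarith
  have key := add_pow_add_sub_pow_sub_lt (A := k * t * (a ^ 2 + b ^ 2)) (B := a * b * (k ^ 2 + t ^ 2))
    (C := k * t * (a ^ 2 - b ^ 2)) (E := a * b * (k ^ 2 - t ^ 2)) (M := 2 * a * b * k * t) hn
    (by positivity) (by positivity) (by positivity) (by positivity) (by ring) (by ring)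
  convert key using 1
  · rw [show k * t * (a ^ 2 + b ^ 2) + 2 * a * b * k * t = k * t * ((a + b) * (a + b)) by ring,
      show k * t * (a ^ 2 + b ^ 2) - 2 * a * b * k * t = k * t * ((a - b) * (a - b)) by ring,
      show k * t * (a ^ 2 - b ^ 2) = k * t * ((a + b) * (a - b)) by ring]
    simp only [mul_pow]
    ring
  · rw [show k * t * (a ^ 2 + b ^ 2) + a * b * (k ^ 2 + t ^ 2) =
        (a * k + b * t) * (a * t + b * k) by ring,
      show k * t * (a ^ 2 + b ^ 2) - a * b * (k ^ 2 + t ^ 2) =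
        (a * k - b * t) * (a * t - b * k) by ring,
      show k * t * (a ^ 2 - b ^ 2) + a * b * (k ^ 2 - t ^ 2) =
        (a * k - b * t) * (a * t + b * k) by ring,
      show k * t * (a ^ 2 - b ^ 2) - a * b * (k ^ 2 - t ^ 2) =
        (a * k + b * t) * (a * t - b * k) by ring]
    rw [mul_pow (a * k + b * t), mul_pow (a * k - b * t), mul_pow (a * k - b * t),
      mul_pow (a * k + b * t)]
    ring

theorem mul_sq_le_of_mul_le_mul (hn : 2 ≤ n) (hb : 0 < b) (hab : b < a) (ht : 0 < t) (hkt : t < k)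
    (h : a * t ≤ b * k) :
    (k * t) ^ n * ((a + b) ^ n - (a - b) ^ n) ^ 2 ≤
      (a * b) ^ n * ((k + t) ^ n - (k - t) ^ n) ^ 2 := by
  have ha := hb.trans hab
  have hk := ht.trans hkt
  obtain ⟨c, hc0, hc⟩ : ∃ c, 0 < c ∧ c ^ 2 = k * t :=
    ⟨_, Real.sqrt_pos.2 (mul_pos hk ht), Real.sq_sqrt (mul_pos hk ht).le⟩
  obtain ⟨d, hd0, hd⟩ : ∃ d, 0 < d ∧ d ^ 2 = a * b :=
    ⟨_, Real.sqrt_pos.2 (mul_pos ha hb), Real.sq_sqrt (mul_pos ha hb).le⟩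
  have h1 : 0 ≤ (b * k - a * t) * (a * k - b * t) :=
    mul_nonneg (sub_nonneg.2 h) (sub_nonneg.2 (by gcongr))
  have h2 : c * (a - b) ≤ d * (k - t) := by
    refine le_of_sq_le_sq ?_ (mul_nonneg hd0.le (sub_nonneg.2 hkt.le))
    rw [mul_pow, mul_pow, hc, hd]
    linarith
  have h3 : c * (a + b) ≤ d * (k + t) := by
    refine le_of_sq_le_sq ?_ (by positivity)
    rw [mul_pow, mul_pow, hc, hd]
    linarith
  have key := pow_sub_pow_le_pow_sub_pow_of_sq_sub_sq_eq hn
    (mul_nonneg hc0.le (sub_nonneg.2 hab.le)) (by gcongr; linarith) h2 (by gcongr; linarith) h3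
    (by simp only [mul_pow, hc, hd]; ring)
  simp only [mul_pow c, mul_pow d, ← mul_sub] at key
  rw [← hc, ← hd, pow_right_comm, pow_right_comm d, ← mul_pow, ← mul_pow]
  refine pow_le_pow_left₀ (mul_nonneg (by positivity) (sub_nonneg.2 ?_)) key 2
  exact pow_le_pow_left₀ (by linarith) (by linarith) n

theorem mul_sq_lt_of_lt_of_lt (hn : 3 ≤ n) (hb : 0 < b) (hab : b < a) (ht : 0 < t) (hkt : t < k) :
    (k * t) ^ n * ((a + b) ^ n - |a - b| ^ n) ^ 2 <
      ((a * k + b * t) ^ n - |a * k - b * t| ^ n) * ((a * t + b * k) ^ n - |a * t - b * k| ^ n) := by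
  rw [abs_of_pos (sub_pos.2 hab)]
  rcases le_total (b * k) (a * t) with h | h
  · exact mul_sq_lt_of_mul_le_mul hn hb hab ht hkt h
  · refine (mul_sq_le_of_mul_le_mul (by lia) hb hab ht hkt h).trans_lt ?_
    have := mul_sq_lt_of_mul_le_mul hn ht hkt hb hab (by linarith)
    rwa [mul_comm k a, mul_comm t b, mul_comm k b, mul_comm t a, add_comm (b * k),
      abs_sub_comm (b * k)] at this

theorem mul_sq_lt (hn : 3 ≤ n) (ha : 0 < a) (hb : 0 < b) (hab : a ≠ b)
    (hk : 0 < k) (ht : 0 < t) (hkt : k ≠ t) :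
    (k * t) ^ n * ((a + b) ^ n - |a - b| ^ n) ^ 2 <
      ((a * k + b * t) ^ n - |a * k - b * t| ^ n) * ((a * t + b * k) ^ n - |a * t - b * k| ^ n) := by
  wlog h : b < a generalizing a b
  · have := this hb ha hab.symm (hab.lt_or_gt.resolve_right h)
    rwa [add_comm b a, abs_sub_comm b a, add_comm (b * k), abs_sub_comm (b * k),
      add_comm (b * t), abs_sub_comm (b * t), mul_comm (_ - _) (_ - _)] at this
  wlog h' : t < k generalizing k t
  · have := this ht hk hkt.symm (hkt.lt_or_gt.resolve_right h')
    rwa [mul_comm t k, mul_comm (_ - _) (_ - _)] at this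
  exact mul_sq_lt_of_lt_of_lt hn hb h ht h'

theorem mul_sq_le_and_eq_imp (hn : 2 ≤ n) (ha : 0 < a) (hb : 0 < b) (hab : a ≠ b)
    (hk : 0 < k) (ht : 0 < t) :
    (k * t) ^ n * ((a + b) ^ n - |a - b| ^ n) ^ 2 ≤
        ((a * k + b * t) ^ n - |a * k - b * t| ^ n) * ((a * t + b * k) ^ n - |a * t - b * k| ^ n) ∧
      ((k * t) ^ n * ((a + b) ^ n - |a - b| ^ n) ^ 2 =
        ((a * k + b * t) ^ n - |a * k - b * t| ^ n) * ((a * t + b * k) ^ n - |a * t - b * k| ^ n) →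
        k = t ∨ n = 2) := by
  rcases eq_or_ne k t with rfl | hkt
  · refine ⟨le_of_eq ?_, fun _ => .inl rfl⟩
    rw [← add_mul, ← sub_mul, abs_mul, abs_of_pos hk]
    simp only [mul_pow]
    ring
  · rcases hn.eq_or_lt with rfl | hn
    · exact ⟨le_of_eq (by simp only [sq_abs]; ring), fun _ => .inr rfl⟩
    · have := mul_sq_lt hn ha hb hab hk ht hkt
      exact ⟨this.le, fun h => absurd h this.ne⟩

theorem abs_sub_pow_lt_add_pow (hn : n ≠ 0) (ha : 0 < a) (hb : 0 < b) :
    |a - b| ^ n < (a + b) ^ n :=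
  pow_lt_pow_left₀ (abs_lt.2 ⟨by linarith, by linarith⟩) (abs_nonneg _) hn

theorem eq_and_eq_of_mul_eq_mul {x y u v : ℝ} (hx : 0 < x) (hy : 0 < y) (hxu : x ≤ u) (hyv : y ≤ v)
    (h : u * v = x * y) : u = x ∧ v = y :=
  ⟨le_antisymm (by nlinarith) hxu, le_antisymm (by nlinarith) hyv⟩

end Numeric

section Homothety

variable {n : ℕ} {K T : Set (EuclideanSpace ℝ (Fin n))}

theorem frontier_smul₀ {c : ℝ} (hc : c ≠ 0) (A : Set (EuclideanSpace ℝ (Fin n))) :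
    frontier (c • A) = c • frontier A :=
  ((Homeomorph.smulOfNeZero c hc).image_frontier A).symm

theorem le_volume_smul_frontier_add_smul_frontier {a b k t : ℝ} (hn : 2 ≤ n)
    (hK : IsCompact K) (hKc : Convex ℝ K) (hKi : (interior K).Nonempty)
    (hT : IsCompact T) (hTc : Convex ℝ T) (hTi : (interior T).Nonempty)
    (ha : 0 < a) (hb : 0 < b) (hk : 0 < k) (ht : 0 < t)
    (hKv : k ^ n = volume.real K) (hTv : t ^ n = volume.real T) :
    (a * k + b * t) ^ n - |a * k - b * t| ^ n ≤ volume.real (a • frontier K + b • frontier T) ∧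
      (volume.real (a • frontier K + b • frontier T) =
          (a * k + b * t) ^ n - |a * k - b * t| ^ n → a * k ≠ b * t →
        (∃ z : EuclideanSpace ℝ (Fin n), T = z +ᵥ (t / k) • K) ∧
          ∃ w : EuclideanSpace ℝ (Fin n), -K = w +ᵥ K) := by
  have hKi' : (interior (a • K)).Nonempty := by
    rw [interior_smul₀ ha.ne']
    exact hKi.smul_set
  have hTi' : (interior (b • T)).Nonempty := by
    rw [interior_smul₀ hb.ne']
    exact hTi.smul_set
  have hKv' : (a * k) ^ n = volume.real (a • K) := by
    rw [volume_real_smul, abs_of_pos ha, mul_pow, hKv]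
  have hTv' : (b * t) ^ n = volume.real (b • T) := by
    rw [volume_real_smul, abs_of_pos hb, mul_pow, hTv]
  rw [← frontier_smul₀ ha.ne', ← frontier_smul₀ hb.ne']
  refine ⟨le_volume_frontier_add_frontier hn (mul_pos ha hk) (mul_pos hb ht) (hK.smul a)
    (hKc.smul a) hKi' (hT.smul b) (hTc.smul b) hTi' hKv' hTv', fun h hne => ?_⟩
  obtain ⟨⟨z, hz⟩, w, hw⟩ := exists_homothety_of_volume_frontier_add_frontier_eq hn (mul_pos ha hk)
    (mul_pos hb ht) (hK.smul a) (hKc.smul a) hKi' (hT.smul b) (hTc.smul b) hTi' hKv' hTv' hne h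
  refine ⟨⟨b⁻¹ • z, ?_⟩, a⁻¹ • w, ?_⟩
  · rw [← inv_smul_smul₀ hb.ne' T, hz, smul_vadd_set, smul_smul, smul_smul]
    congr 2
    field_simp
  · rw [← inv_smul_smul₀ ha.ne' (-K), Set.smul_set_neg, hw, smul_vadd_set, inv_smul_smul₀ ha.ne']

theorem exists_homothety_of_volume_mul_volume_eq (hn : 2 ≤ n)
    (hK : IsCompact K) (hKc : Convex ℝ K) (hKi : (interior K).Nonempty)
    (hT : IsCompact T) (hTc : Convex ℝ T) (hTi : (interior T).Nonempty)
    {a b k t : ℝ} (ha : 0 < a) (hb : 0 < b) (hab : a ≠ b) (hk : 0 < k) (ht : 0 < t)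
    (hKv : k ^ n = volume.real K) (hTv : t ^ n = volume.real T)
    (h : volume.real (a • frontier K + b • frontier T) *
        volume.real (a • frontier T + b • frontier K) =
      volume.real K * volume.real T * ((a + b) ^ n - |a - b| ^ n) ^ 2) :
    (k = t ∨ n = 2) ∧
      (((∃ z : EuclideanSpace ℝ (Fin n), T = z +ᵥ (t / k) • K) ∧
          ∃ w : EuclideanSpace ℝ (Fin n), -K = w +ᵥ K) ∨
        ((∃ z : EuclideanSpace ℝ (Fin n), K = z +ᵥ (k / t) • T) ∧
          ∃ w : EuclideanSpace ℝ (Fin n), -T = w +ᵥ T)) := by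
  obtain ⟨h1, h2⟩ := le_volume_smul_frontier_add_smul_frontier hn hK hKc hKi hT hTc hTi ha hb hk ht
    hKv hTv
  obtain ⟨h3, h4⟩ := le_volume_smul_frontier_add_smul_frontier hn hT hTc hTi hK hKc hKi ha hb ht hk
    hTv hKv
  obtain ⟨h5, h6⟩ := mul_sq_le_and_eq_imp hn ha hb hab hk ht
  have p1 := sub_pos.2 (abs_sub_pow_lt_add_pow (n := n) (by lia) (mul_pos ha hk) (mul_pos hb ht))
  have p2 := sub_pos.2 (abs_sub_pow_lt_add_pow (n := n) (by lia) (mul_pos ha ht) (mul_pos hb hk))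
  rw [← hKv, ← hTv, ← mul_pow] at h
  have h7 := mul_le_mul h1 h3 p2.le (p1.le.trans h1)
  obtain ⟨e1, e2⟩ := eq_and_eq_of_mul_eq_mul p1 p2 h1 h3 (le_antisymm (h.trans_le h5) h7)
  refine ⟨h6 (le_antisymm h5 (h7.trans_eq h)), ?_⟩
  by_cases hne : a * k = b * t
  · refine .inr (h4 e2 fun hne' => hab ?_)
    have : a * a * (k * t) = b * b * (k * t) := by linear_combination a * t * hne + b * t * hne'
    have := mul_right_cancel₀ (mul_pos hk ht).ne' this
    nlinarith
  · exact .inl (h2 e1 hne)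

end Homothety

theorem boundary_BBM_equality_cases (n : ℕ) (hn : 2 ≤ n)
    (K T : Set (EuclideanSpace ℝ (Fin n)))
    (hK : IsCompact K) (hKconv : Convex ℝ K) (hKint : (interior K).Nonempty)
    (hT : IsCompact T) (hTconv : Convex ℝ T) (hTint : (interior T).Nonempty)
    (l : ℝ) (hl0 : 0 < l) (hl1 : l < 1) (hl : l ≠ 1/2) :
    (volume (l • frontier K + (1 - l) • frontier T)).toReal *
      (volume (l • frontier T + (1 - l) • frontier K)).toReal =
    (volume K).toReal * (volume T).toReal * (1 - |1 - 2*l| ^ n) ^ 2 ↔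
    ((∃ C : Set (EuclideanSpace ℝ (Fin n)),
        IsCompact C ∧ Convex ℝ C ∧ (interior C).Nonempty ∧ (∃ z : EuclideanSpace ℝ (Fin n), -C = z +ᵥ C) ∧
        (∃ x : EuclideanSpace ℝ (Fin n), K = x +ᵥ C) ∧ (∃ y : EuclideanSpace ℝ (Fin n), T = y +ᵥ C)) ∨
      (n = 2 ∧ ∃ C : Set (EuclideanSpace ℝ (Fin n)),
        IsCompact C ∧ Convex ℝ C ∧ (interior C).Nonempty ∧ (∃ z : EuclideanSpace ℝ (Fin n), -C = z +ᵥ C) ∧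
        (∃ x : EuclideanSpace ℝ (Fin n), ∃ r : ℝ, 0 < r ∧ K = x +ᵥ r • C) ∧
        (∃ y : EuclideanSpace ℝ (Fin n), ∃ s : ℝ, 0 < s ∧ T = y +ᵥ s • C))) := by
  have hm0 : 0 < 1 - l := sub_pos.2 hl1
  have hlm : l ≠ 1 - l := fun h => hl (by linarith)
  have hF : 1 - |1 - 2 * l| ^ n = (l + (1 - l)) ^ n - |l - (1 - l)| ^ n := by
    rw [abs_sub_comm l, add_sub_cancel, one_pow, show 1 - l - l = 1 - 2 * l by ring]
  simp only [← measureReal_def, hF]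
  constructor
  · intro h
    obtain ⟨k, hk0, hk⟩ := exists_pos_pow_eq_volume (by lia) hK hKint
    obtain ⟨t, ht0, ht⟩ := exists_pos_pow_eq_volume (by lia) hT hTint
    obtain ⟨hkt, hKT⟩ := exists_homothety_of_volume_mul_volume_eq hn hK hKconv hKint hT hTconv hTint
      hl0 hm0 hlm hk0 ht0 hk ht h
    rcases hkt with rfl | rfl
    · simp only [div_self hk0.ne', one_smul] at hKT
      rcases hKT with ⟨hz, hw⟩ | ⟨hz, hw⟩
      · exact .inl ⟨K, hK, hKconv, hKint, hw, ⟨0, (zero_vadd _ K).symm⟩, hz⟩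
      · exact .inl ⟨T, hT, hTconv, hTint, hw, hz, 0, (zero_vadd _ T).symm⟩
    · rcases hKT with ⟨⟨z, hz⟩, hw⟩ | ⟨⟨z, hz⟩, hw⟩
      · exact .inr ⟨rfl, K, hK, hKconv, hKint, hw, ⟨0, 1, one_pos, by simp⟩, z, _, div_pos ht0 hk0, hz⟩
      · exact .inr ⟨rfl, T, hT, hTconv, hTint, hw, ⟨z, _, div_pos hk0 ht0, hz⟩, 0, 1, one_pos, by simp⟩
  · have key : ∀ {C : Set (EuclideanSpace ℝ (Fin n))} {x y z : EuclideanSpace ℝ (Fin n)} {r s : ℝ},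
        IsCompact C → Convex ℝ C → (interior C).Nonempty → -C = z +ᵥ C → 0 < r → 0 < s →
        volume.real (l • frontier (x +ᵥ r • C) + (1 - l) • frontier (y +ᵥ s • C)) =
          ((l * r + (1 - l) * s) ^ n - |l * r - (1 - l) * s| ^ n) * volume.real C := by
      intro C x y z r s hC hCc hCi hz hr hs
      rw [← frontier_smul₀ hl0.ne', ← frontier_smul₀ hm0.ne', smul_vadd_set, smul_vadd_set,
        smul_smul, smul_smul]
      exact volume_frontier_add_frontier_of_symmetric hn hC hCc hCi (mul_pos hl0 hr)
        (mul_pos hm0 hs) hz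
    rintro (⟨C, hC, hCc, hCi, ⟨z, hz⟩, ⟨x, rfl⟩, y, rfl⟩ |
      ⟨rfl, C, hC, hCc, hCi, ⟨z, hz⟩, ⟨x, r, hr, rfl⟩, y, s, hs, rfl⟩)
    · have h1 := key (x := x) (y := y) hC hCc hCi hz one_pos one_pos
      have h2 := key (x := y) (y := x) hC hCc hCi hz one_pos one_pos
      simp only [one_smul, mul_one] at h1 h2
      rw [h1, h2, volume_real_vadd, volume_real_vadd]
      ring
    · rw [key hC hCc hCi hz hr hs, key hC hCc hCi hz hs hr]
      simp only [volume_real_vadd, volume_real_smul, sq_abs]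
      ring
end

section
/- Let n ≥ 1 and let K, T ⊆ ℝⁿ be compact sets with T nonempty and with the Minkowski difference K ⊖ T nonempty. Then vol(K ⊖ T)^{1/n} ≤ vol(K)^{1/n} − vol(T)^{1/n}. -/
open MeasureTheory

/-- The Minkowski difference `A ⊖ B = {x : x − B ⊆ int(A)}`. -/
def minkDiff {n : ℕ} (A B : Set (EuclideanSpace ℝ (Fin n))) :
    Set (EuclideanSpace ℝ (Fin n)) :=
  {x | ∀ b ∈ B, x - b ∈ interior A}

open ENNReal Set

theorem volume_add_le_of_isCompact {A B C : Set ℝ} (hA : IsCompact A) (hB : IsCompact B)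
    (hA' : A.Nonempty) (hB' : B.Nonempty) (h : ∀ x ∈ A, ∀ y ∈ B, x + y ∈ C) :
    volume A + volume B ≤ volume C := by
  have ha := hA.sSup_mem hA'
  have hb := hB.sInf_mem hB'
  set a := sSup A
  set b := sInf B
  have hd : AEDisjoint volume ((fun x => x + b) '' A) ((fun y => a + y) '' B) := by
    refine measure_mono_null (t := {a + b}) ?_ Real.volume_singleton
    rintro _ ⟨⟨x, hx, rfl⟩, ⟨y, hy, hxy⟩⟩
    have h1 : x ≤ a := le_csSup hA.bddAbove hx
    have h2 : b ≤ y := csInf_le hB.bddBelow hy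
    simp only [mem_singleton_iff] at hxy ⊢
    linarith
  have hm : NullMeasurableSet ((fun y => a + y) '' B) volume :=
    (hB.image (by fun_prop)).measurableSet.nullMeasurableSet
  calc volume A + volume B
      = volume ((fun x => x + b) '' A ∪ (fun y => a + y) '' B) := by
        rw [measure_union₀ hm hd]; simp
    _ ≤ volume C := by
        refine measure_mono (union_subset ?_ ?_)
        · rintro _ ⟨x, hx, rfl⟩
          exact h x hx b hb
        · rintro _ ⟨y, hy, rfl⟩
          exact h a ha y hy

/-- The one-dimensional Brunn–Minkowski inequality. -/
theorem volume_add_le_of_measurableSet {A B C : Set ℝ} (hA : MeasurableSet A)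
    (hB : MeasurableSet B) (hA' : A.Nonempty) (hB' : B.Nonempty)
    (h : ∀ x ∈ A, ∀ y ∈ B, x + y ∈ C) : volume A + volume B ≤ volume C := by
  obtain ⟨a, ha⟩ := hA'
  obtain ⟨b, hb⟩ := hB'
  rw [hA.measure_eq_iSup_isCompact, hB.measure_eq_iSup_isCompact]
  simp only [iSup_and']
  refine ENNReal.biSup_add_biSup_le' ⟨∅, by simp⟩ ⟨∅, by simp⟩ ?_
  rintro P ⟨hPA, hP⟩ Q ⟨hQB, hQ⟩
  refine le_trans (add_le_add (measure_mono (subset_insert a P)) (measure_mono (subset_insert b Q)))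
    (volume_add_le_of_isCompact (hP.insert a) (hQ.insert b) (insert_nonempty _ _)
      (insert_nonempty _ _) fun x hx y hy => h x ?_ y ?_)
  · exact insert_subset ha hPA hx
  · exact insert_subset hb hQB hy

theorem ofReal_mul_volume_add_le {s t : ℝ} (hs : 0 < s) (ht : 0 < t) {A B C : Set ℝ}
    (hA : MeasurableSet A) (hB : MeasurableSet B) (hA' : A.Nonempty) (hB' : B.Nonempty)
    (h : ∀ x ∈ A, ∀ y ∈ B, s * x + t * y ∈ C) :
    ENNReal.ofReal s * volume A + ENNReal.ofReal t * volume B ≤ volume C := by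
  have key : ∀ {r : ℝ}, 0 < r → ∀ S : Set ℝ,
      volume ((fun x => r⁻¹ * x) ⁻¹' S) = ENNReal.ofReal r * volume S := by
    intro r hr S
    rw [Real.volume_preimage_mul_left (inv_ne_zero hr.ne'), inv_inv, abs_of_pos hr]
  rw [← key hs, ← key ht]
  obtain ⟨a, ha⟩ := hA'
  obtain ⟨b, hb⟩ := hB'
  refine volume_add_le_of_measurableSet (hA.preimage (by fun_prop)) (hB.preimage (by fun_prop))
    ⟨s * a, by simpa [hs.ne'] using ha⟩ ⟨t * b, by simpa [ht.ne'] using hb⟩ ?_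
  intro x hx y hy
  simpa [hs.ne', ht.ne'] using h _ hx _ hy

theorem lintegral_eq_lintegral_measure_ofReal_lt {α : Type*} [MeasurableSpace α] (μ : Measure α)
    {f : α → ℝ≥0∞} (hf : Measurable f) (hf' : ∀ x, f x ≠ ∞) :
    ∫⁻ x, f x ∂μ = ∫⁻ c in Ioi (0 : ℝ), μ {x | ENNReal.ofReal c < f x} := by
  have h := lintegral_eq_lintegral_meas_lt μ (f := fun x => (f x).toReal)
    (Filter.Eventually.of_forall fun _ => toReal_nonneg) hf.ennreal_toReal.aemeasurable
  simp only [ofReal_toReal (hf' _)] at h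
  rw [h]
  refine setLIntegral_congr_fun measurableSet_Ioi fun c hc => ?_
  simp only [ofReal_lt_iff_lt_toReal (le_of_lt hc) (hf' _)]

theorem ENNReal.geom_mean_le_arith_mean2 {s t : ℝ} (hs : 0 < s) (ht : 0 < t) (hst : s + t = 1)
    (a b : ℝ≥0∞) : a ^ s * b ^ t ≤ ENNReal.ofReal s * a + ENNReal.ofReal t * b := by
  have h := ENNReal.young_inequality (a ^ s) (b ^ t)
    (p := s⁻¹) (q := t⁻¹) (Real.holderConjugate_iff.2 ⟨(one_lt_inv₀ hs).2 (by linarith), by simpa⟩)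
  rw [ENNReal.rpow_rpow_inv hs.ne', ENNReal.rpow_rpow_inv ht.ne', ofReal_inv_of_pos hs,
    ofReal_inv_of_pos ht] at h
  simpa [div_eq_mul_inv, mul_comm] using h

theorem prekopa_leindler_real_of_iSup_eq_one {s t : ℝ} (hs : 0 < s) (ht : 0 < t)
    (hst : s + t = 1) {f g h : ℝ → ℝ≥0∞} (hf : Measurable f) (hg : Measurable g)
    (hh : Measurable h) (hf1 : ⨆ x, f x = 1) (hg1 : ⨆ x, g x = 1)
    (H : ∀ x y, f x ^ s * g y ^ t ≤ h (s * x + t * y)) :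
    (∫⁻ x, f x) ^ s * (∫⁻ x, g x) ^ t ≤ ∫⁻ x, h x := by
  have hfle : ∀ x, f x ≤ 1 := fun x => hf1 ▸ le_iSup f x
  have hgle : ∀ x, g x ≤ 1 := fun x => hg1 ▸ le_iSup g x
  refine (ENNReal.geom_mean_le_arith_mean2 hs ht hst _ _).trans ?_
  have hmin : ∀ x, min (h x) 1 ≠ ∞ := fun x => ne_top_of_le_ne_top one_ne_top (min_le_right _ _)
  refine le_trans ?_ (lintegral_mono fun x => min_le_left (h x) 1)
  rw [lintegral_eq_lintegral_measure_ofReal_lt _ hf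
      fun x => ne_top_of_le_ne_top one_ne_top (hfle x),
    lintegral_eq_lintegral_measure_ofReal_lt _ hg
      fun x => ne_top_of_le_ne_top one_ne_top (hgle x),
    lintegral_eq_lintegral_measure_ofReal_lt _ (hh.min measurable_const) hmin,
    ← lintegral_const_mul' _ _ ofReal_ne_top, ← lintegral_const_mul' _ _ ofReal_ne_top]
  refine (le_lintegral_add _ _).trans (setLIntegral_mono' measurableSet_Ioi fun c hc => ?_)
  rcases lt_or_ge c 1 with hc1 | hc1
  · have hc1' : ENNReal.ofReal c < 1 := by simpa using hc1
    have hc0 : ENNReal.ofReal c ≠ 0 := by simpa using hc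
    obtain ⟨x₀, hx₀⟩ := lt_iSup_iff.1 (hc1'.trans_eq hf1.symm)
    obtain ⟨y₀, hy₀⟩ := lt_iSup_iff.1 (hc1'.trans_eq hg1.symm)
    refine ofReal_mul_volume_add_le hs ht (measurableSet_lt measurable_const hf)
      (measurableSet_lt measurable_const hg) ⟨x₀, hx₀⟩ ⟨y₀, hy₀⟩ fun x hx y hy => lt_min ?_ hc1'
    calc ENNReal.ofReal c = ENNReal.ofReal c ^ s * ENNReal.ofReal c ^ t := by
          rw [← ENNReal.rpow_add _ _ hc0 ofReal_ne_top, hst, ENNReal.rpow_one]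
      _ < f x ^ s * g y ^ t :=
          ENNReal.mul_lt_mul (ENNReal.rpow_lt_rpow hx hs) (ENNReal.rpow_lt_rpow hy ht)
      _ ≤ _ := H x y
  · have hc1' : (1 : ℝ≥0∞) ≤ ENNReal.ofReal c := by simpa using hc1
    have e1 : {x | ENNReal.ofReal c < f x} = ∅ :=
      eq_empty_of_forall_notMem fun x hx => not_le_of_gt hx ((hfle x).trans hc1')
    have e2 : {x | ENNReal.ofReal c < g x} = ∅ :=
      eq_empty_of_forall_notMem fun x hx => not_le_of_gt hx ((hgle x).trans hc1')
    simp [e1, e2]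

theorem prekopa_leindler_real_of_bounded {s t : ℝ} (hs : 0 < s) (ht : 0 < t)
    (hst : s + t = 1) {f g h : ℝ → ℝ≥0∞} (hf : Measurable f) (hg : Measurable g)
    (hh : Measurable h) (hfb : ⨆ x, f x ≠ ∞) (hgb : ⨆ x, g x ≠ ∞)
    (H : ∀ x y, f x ^ s * g y ^ t ≤ h (s * x + t * y)) :
    (∫⁻ x, f x) ^ s * (∫⁻ x, g x) ^ t ≤ ∫⁻ x, h x := by
  rcases eq_or_ne (⨆ x, f x) 0 with hf0 | hf0
  · have : ∀ x, f x = 0 := by simpa using hf0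
    simp [this, hs]
  rcases eq_or_ne (⨆ x, g x) 0 with hg0 | hg0
  · have : ∀ x, g x = 0 := by simpa using hg0
    simp [this, ht]
  set a := ⨆ x, f x with ha
  set b := ⨆ x, g x with hb
  have has : a ^ s ≠ 0 := by simp [hf0, hfb]
  have hbt : b ^ t ≠ 0 := by simp [hg0, hgb]
  have has' : a ^ s ≠ ∞ := rpow_ne_top_of_nonneg hs.le hfb
  have hbt' : b ^ t ≠ ∞ := rpow_ne_top_of_nonneg ht.le hgb
  have key := prekopa_leindler_real_of_iSup_eq_one hs ht hst
    (f := fun x => a⁻¹ * f x) (g := fun x => b⁻¹ * g x)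
    (h := fun x => (a ^ s * b ^ t)⁻¹ * h x) (hf.const_mul _) (hg.const_mul _) (hh.const_mul _)
    (by rw [← ENNReal.mul_iSup, ← ha, ENNReal.inv_mul_cancel hf0 hfb])
    (by rw [← ENNReal.mul_iSup, ← hb, ENNReal.inv_mul_cancel hg0 hgb]) (by
      intro x y
      refine le_trans (le_of_eq ?_) (mul_le_mul_right (H x y) _)
      rw [ENNReal.mul_rpow_of_nonneg _ _ hs.le, ENNReal.mul_rpow_of_nonneg _ _ ht.le,
        ENNReal.inv_rpow, ENNReal.inv_rpow, ENNReal.mul_inv (.inl has) (.inl has')]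
      ring)
  rw [lintegral_const_mul _ hf, lintegral_const_mul _ hg, lintegral_const_mul _ hh,
    ENNReal.mul_rpow_of_nonneg _ _ hs.le, ENNReal.mul_rpow_of_nonneg _ _ ht.le,
    ENNReal.inv_rpow, ENNReal.inv_rpow, mul_mul_mul_comm,
    ← ENNReal.mul_inv (.inl has) (.inl has')] at key
  exact (ENNReal.mul_le_mul_iff_right (by simp [has', hbt', ENNReal.mul_eq_top])
    (by simp [has, hbt])).1 key

theorem lintegral_eq_iSup_lintegral_min_natCast {α : Type*} [MeasurableSpace α] (μ : Measure α)
    {f : α → ℝ≥0∞} (hf : Measurable f) :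
    ∫⁻ x, f x ∂μ = ⨆ m : ℕ, ∫⁻ x, min (f x) m ∂μ := by
  rw [← lintegral_iSup (fun m => hf.min measurable_const)]
  · simp only [← inf_iSup_eq, ENNReal.iSup_natCast, le_top, inf_of_le_left]
  · intro m k hmk x
    exact min_le_min_left _ (by exact_mod_cast hmk)

/-- The Prékopa–Leindler inequality on the real line. -/
theorem prekopa_leindler_real {s t : ℝ} (hs : 0 < s) (ht : 0 < t)
    (hst : s + t = 1) {f g h : ℝ → ℝ≥0∞} (hf : Measurable f) (hg : Measurable g)
    (hh : Measurable h) (H : ∀ x y, f x ^ s * g y ^ t ≤ h (s * x + t * y)) :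
    (∫⁻ x, f x) ^ s * (∫⁻ x, g x) ^ t ≤ ∫⁻ x, h x := by
  have hrpow : ∀ {r : ℝ} (hr : 0 < r) (u : ℕ → ℝ≥0∞), (⨆ m, u m) ^ r = ⨆ m, u m ^ r :=
    fun hr u => (ENNReal.orderIsoRpow _ hr).map_iSup u
  have hbdd : ∀ (u : ℝ → ℝ≥0∞) (m : ℕ), ⨆ x, min (u x) m ≠ ∞ := fun u m =>
    ne_top_of_le_ne_top (natCast_ne_top m) (iSup_le fun x => min_le_right _ _)
  rw [lintegral_eq_iSup_lintegral_min_natCast _ hf, lintegral_eq_iSup_lintegral_min_natCast _ hg,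
    hrpow hs, hrpow ht, ENNReal.iSup_mul]
  refine iSup_le fun m => ?_
  rw [ENNReal.mul_iSup]
  refine iSup_le fun k => prekopa_leindler_real_of_bounded hs ht hst (hf.min measurable_const)
    (hg.min measurable_const) hh (hbdd f m) (hbdd g k) fun x y => le_trans ?_ (H x y)
  gcongr <;> exact min_le_left _ _

/-- The Prékopa–Leindler inequality. -/
theorem prekopa_leindler_s17 {s t : ℝ} (hs : 0 < s) (ht : 0 < t) (hst : s + t = 1) :
    ∀ {n : ℕ} {f g h : (Fin n → ℝ) → ℝ≥0∞}, Measurable f → Measurable g → Measurable h →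
      (∀ x y, f x ^ s * g y ^ t ≤ h (s • x + t • y)) →
      (∫⁻ x, f x) ^ s * (∫⁻ x, g x) ^ t ≤ ∫⁻ x, h x := by
  intro n
  induction n with
  | zero =>
    intro f g h _ _ _ H
    simp only [lintegral_unique, volume_pi, Measure.pi_univ, Finset.univ_eq_empty,
      Finset.prod_empty, mul_one]
    exact (H _ _).trans_eq (congrArg h (Subsingleton.elim _ _))
  | succ n ih =>
    intro f g h hf hg hh H
    have hpres := (volume_preserving_piFinSuccAbove (fun _ : Fin (n + 1) => ℝ) 0).symm
    set e := (MeasurableEquiv.piFinSuccAbove (fun _ : Fin (n + 1) => ℝ) 0).symm with he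
    have hlin : ∀ x y : ℝ × (Fin n → ℝ), e (s • x + t • y) = s • e x + t • e y := by
      intro x y
      ext i
      refine Fin.cases ?_ (fun j => ?_) i <;> simp [he, MeasurableEquiv.piFinSuccAbove]
    have hfubini : ∀ {u : (Fin (n + 1) → ℝ) → ℝ≥0∞}, Measurable u →
        ∫⁻ x, u x = ∫⁻ r, ∫⁻ z, u (e (r, z)) := by
      intro u hu
      rw [← hpres.lintegral_comp hu]
      exact lintegral_prod _ (hu.comp e.measurable).aemeasurable
    have hsec : ∀ {u : (Fin (n + 1) → ℝ) → ℝ≥0∞}, Measurable u →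
        ∀ r, Measurable fun z => u (e (r, z)) :=
      fun hu r => (hu.comp e.measurable).comp measurable_prodMk_left
    have hmarg : ∀ {u : (Fin (n + 1) → ℝ) → ℝ≥0∞}, Measurable u →
        Measurable fun r => ∫⁻ z, u (e (r, z)) :=
      fun hu => (hu.comp e.measurable).lintegral_prod_right'
    rw [hfubini hf, hfubini hg, hfubini hh]
    refine prekopa_leindler_real hs ht hst (hmarg hf) (hmarg hg) (hmarg hh) fun x y => ?_
    refine ih (hsec hf x) (hsec hg y) (hsec hh _) fun z w => ?_
    have h1 := H (e (x, z)) (e (y, w))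
    rwa [← hlin] at h1

/-- The Brunn–Minkowski inequality for measurable sets of positive finite volume. -/
theorem brunn_minkowski_s17 {n : ℕ} (hn : n ≠ 0) {A B C : Set (EuclideanSpace ℝ (Fin n))}
    (hA : MeasurableSet A) (hB : MeasurableSet B) (hC : MeasurableSet C)
    (hA0 : volume A ≠ 0) (hB0 : volume B ≠ 0) (hA1 : volume A ≠ ∞) (hB1 : volume B ≠ ∞)
    (hC1 : volume C ≠ ∞) (h : ∀ x ∈ A, ∀ y ∈ B, x + y ∈ C) :
    (volume A).toReal ^ ((1 : ℝ) / n) + (volume B).toReal ^ ((1 : ℝ) / n) ≤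
      (volume C).toReal ^ ((1 : ℝ) / n) := by
  have hroot : ∀ v : ℝ, 0 ≤ v → (v ^ ((1 : ℝ) / n)) ^ n = v := fun v hv => by
    rw [one_div, Real.rpow_inv_natCast_pow hv hn]
  have hvA := toReal_pos hA0 hA1
  have hvB := toReal_pos hB0 hB1
  set a := (volume A).toReal ^ ((1 : ℝ) / n) with ha
  set b := (volume B).toReal ^ ((1 : ℝ) / n) with hb
  have ha0 : 0 < a := Real.rpow_pos_of_pos hvA _
  have hb0 : 0 < b := Real.rpow_pos_of_pos hvB _
  have hab : 0 < a + b := add_pos ha0 hb0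
  have hscale : ∀ {r : ℝ}, 0 < r → ∀ {S : Set (EuclideanSpace ℝ (Fin n))}, MeasurableSet S →
      volume S ≠ ∞ → MeasurableSet {z : Fin n → ℝ | r • WithLp.toLp 2 z ∈ S} ∧
      volume {z : Fin n → ℝ | r • WithLp.toLp 2 z ∈ S} =
        ENNReal.ofReal ((r ^ n)⁻¹ * (volume S).toReal) := by
    intro r hr S hS hS1
    have hm : MeasurableSet ((fun x => r • x) ⁻¹' S) := hS.preimage (by fun_prop)
    have hp := PiLp.volume_preserving_toLp (Fin n)
    refine ⟨hp.measurable hm, ?_⟩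
    have := hp.measure_preimage hm.nullMeasurableSet
    rw [Measure.addHaar_preimage_smul _ hr.ne', finrank_euclideanSpace_fin,
      abs_of_pos (by positivity)] at this
    rw [ofReal_mul (by positivity), ofReal_toReal hS1, ← this]
    rfl
  obtain ⟨mA, vA⟩ := hscale ha0 hA hA1
  obtain ⟨mB, vB⟩ := hscale hb0 hB hB1
  obtain ⟨mC, vC⟩ := hscale hab hC hC1
  rw [ha, hroot _ hvA.le, inv_mul_cancel₀ hvA.ne', ← ha] at vA
  rw [hb, hroot _ hvB.le, inv_mul_cancel₀ hvB.ne', ← hb] at vB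
  have hs : 0 < a / (a + b) := by positivity
  have ht : 0 < b / (a + b) := by positivity
  have key := prekopa_leindler_s17 hs ht (by field_simp)
    (measurable_one.indicator mA) (measurable_one.indicator mB) (measurable_one.indicator mC) (by
      intro x y
      by_cases hx : a • WithLp.toLp 2 x ∈ A
      · by_cases hy : b • WithLp.toLp 2 y ∈ B
        · have hz : (a + b) • WithLp.toLp 2 ((a / (a + b)) • x + (b / (a + b)) • y) ∈ C := by
            have h1 := h _ hx _ hy
            convert h1 using 1
            rw [WithLp.toLp_add, WithLp.toLp_smul, WithLp.toLp_smul, smul_add, smul_smul,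
              smul_smul, mul_div_cancel₀ _ hab.ne', mul_div_cancel₀ _ hab.ne']
          simp only [indicator, mem_ofPred_eq, hx, hy, hz, if_true, Pi.one_apply,
            ENNReal.one_rpow, mul_one, le_refl]
        · simp [indicator, hy, ht]
      · simp [indicator, hx, hs])
  rw [lintegral_indicator_one mA, lintegral_indicator_one mB, lintegral_indicator_one mC,
    vA, vB, vC] at key
  simp only [ofReal_one, ENNReal.one_rpow, mul_one, one_le_ofReal] at key
  have hle : (a + b) ^ n ≤ (volume C).toReal := by
    rwa [inv_mul_eq_div, one_le_div (by positivity)] at key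
  rw [one_div]
  exact (Real.le_rpow_inv_iff_of_pos hab.le toReal_nonneg (by positivity)).2 (by simpa using hle)

theorem isOpen_minkDiff {n : ℕ} {K T : Set (EuclideanSpace ℝ (Fin n))} (hT : IsCompact T) :
    IsOpen (minkDiff K T) := by
  have h : minkDiff K T = ((fun p : EuclideanSpace ℝ (Fin n) × EuclideanSpace ℝ (Fin n) =>
      p.1 + p.2) '' ((interior K)ᶜ ×ˢ T))ᶜ := by
    ext x
    simp only [minkDiff, mem_ofPred_eq, mem_compl_iff, mem_image, mem_prod, Prod.exists, not_exists,
      not_and, and_imp]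
    refine ⟨fun hx u b hu hb hub => hu (by simpa [← hub] using hx b hb), fun hx b hb => ?_⟩
    by_contra hu
    exact hx (x - b) b hu hb (sub_add_cancel _ _)
  rw [h, image_prod (f := fun x y : EuclideanSpace ℝ (Fin n) => x + y), image2_add,
    isOpen_compl_iff]
  exact isOpen_interior.isClosed_compl.add_right_of_isCompact hT

theorem minkDiff_volume_bound (n : ℕ) (hn : 1 ≤ n)
    (K T : Set (EuclideanSpace ℝ (Fin n)))
    (hK : IsCompact K) (hT : IsCompact T) (hTne : T.Nonempty)
    (hne : (minkDiff K T).Nonempty) :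
    (volume (minkDiff K T)).toReal ^ ((1 : ℝ) / n) ≤
      (volume K).toReal ^ ((1 : ℝ) / n) - (volume T).toReal ^ ((1 : ℝ) / n) := by
  have hopen : IsOpen (minkDiff K T) := isOpen_minkDiff hT
  obtain ⟨b, hb⟩ := hTne
  have hle : volume (minkDiff K T) ≤ volume K := by
    rw [← measure_preimage_add_right volume (-b) K]
    exact measure_mono fun x hx => by
      simpa [sub_eq_add_neg] using interior_subset (hx b hb)
  have hK1 : volume K ≠ ∞ := hK.measure_lt_top.ne
  have hD1 : volume (minkDiff K T) ≠ ∞ := ne_top_of_le_ne_top hK1 hle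
  rcases eq_or_ne (volume T) 0 with hT0 | hT0
  · rw [hT0, toReal_zero, Real.zero_rpow (by positivity), sub_zero]
    gcongr
  · rw [le_sub_iff_add_le, ← Measure.measure_neg volume T]
    refine brunn_minkowski_s17 (by omega) hopen.measurableSet hT.neg.measurableSet hK.measurableSet
      (hopen.measure_pos volume hne).ne' (by rwa [Measure.measure_neg]) hD1
      hT.neg.measure_lt_top.ne hK1 fun x hx y hy => ?_
    simpa using interior_subset (hx (-y) hy)
end

section
/- There exists a constant C > 0 such that for every integer n ≥ 2 and all compact sets K, T ⊆ ℝⁿ, each with connected boundary and positive volume, satisfying C/√n ≤ (vol(K)/vol(T))^{1/n} ≤ √n/C, one has vol(∂K + ∂T)^{2/n} ≥ vol(K)^{2/n} + vol(T)^{2/n}. -/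
open MeasureTheory Pointwise
open scoped ENNReal

/-- The Brunn–Minkowski inequality on the real line, for compact sets. -/
theorem IsCompact.volume_add_volume_le_volume_add {A B : Set ℝ} (hA : IsCompact A)
    (hB : IsCompact B) (hA0 : A.Nonempty) (hB0 : B.Nonempty) :
    volume A + volume B ≤ volume (A + B) := by
  obtain ⟨M, hMA, hM⟩ := hA.exists_isGreatest hA0
  obtain ⟨m, hmB, hm⟩ := hB.exists_isLeast hB0
  have hA' : volume ((fun x => x + m) '' A) = volume A := by
    simp
  have hB' : volume ((fun x => M + x) '' B) = volume B := by
    simp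
  have hdisj : AEDisjoint volume ((fun x => x + m) '' A) ((fun x => M + x) '' B) := by
    refine measure_mono_null (t := {M + m}) ?_ (by simp)
    rintro _ ⟨⟨x, hx, rfl⟩, ⟨y, hy, hxy⟩⟩
    have h1 := hM hx
    have h2 := hm hy
    simp only at hxy
    simp only [Set.mem_singleton_iff]
    linarith
  have hmeas : MeasurableSet ((fun x => M + x) '' B) :=
    (hB.image (by fun_prop)).measurableSet
  rw [← hA', ← hB', ← measure_union₀ hmeas.nullMeasurableSet hdisj]
  apply measure_mono
  rintro _ (⟨x, hx, rfl⟩ | ⟨x, hx, rfl⟩)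
  · exact Set.add_mem_add hx hmB
  · exact Set.add_mem_add hMA hx

/-- The Brunn–Minkowski inequality on the real line, for measurable sets. -/
theorem MeasurableSet.volume_add_volume_le_volume_add {A B : Set ℝ} (hA : MeasurableSet A)
    (hB : MeasurableSet B) (hA0 : A.Nonempty) (hB0 : B.Nonempty) :
    volume A + volume B ≤ volume (A + B) := by
  rw [hA.measure_eq_iSup_isCompact, hB.measure_eq_iSup_isCompact]
  have key : ∀ K ⊆ A, ∀ L ⊆ B, IsCompact K → IsCompact L →
      volume K + volume L ≤ volume (A + B) := by
    intro K hK L hL hKc hLc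
    obtain ⟨a, ha⟩ := hA0
    obtain ⟨b, hb⟩ := hB0
    have h := (hKc.insert a).volume_add_volume_le_volume_add (hLc.insert b)
      (Set.insert_nonempty _ _) (Set.insert_nonempty _ _)
    calc volume K + volume L ≤ volume (insert a K) + volume (insert b L) := by
          gcongr <;> exact Set.subset_insert _ _
      _ ≤ _ := h
      _ ≤ volume (A + B) := by
          gcongr
          · exact Set.insert_subset ha hK
          · exact Set.insert_subset hb hL
  simp only [iSup_and']
  exact ENNReal.biSup_add_biSup_le' ⟨∅, Set.empty_subset _, isCompact_empty⟩
    ⟨∅, Set.empty_subset _, isCompact_empty⟩ fun K hK L hL => key K hK.1 L hL.1 hK.2 hL.2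

theorem lintegral_min_one_eq_lintegral_measure_lt {α : Type*} [MeasurableSpace α] (μ : Measure α)
    [SFinite μ] {f : α → ℝ≥0∞} (hf : Measurable f) :
    ∫⁻ x, min (f x) 1 ∂μ = ∫⁻ t in Set.Ioo (0 : ℝ) 1, μ {x | ENNReal.ofReal t < f x} := by
  have hS : MeasurableSet {p : α × ℝ | ENNReal.ofReal p.2 < f p.1} :=
    measurableSet_lt (by fun_prop) (by fun_prop)
  have h1 : ∀ x, min (f x) 1 = ∫⁻ t in Set.Ioo (0 : ℝ) 1,
      {p : α × ℝ | ENNReal.ofReal p.2 < f p.1}.indicator 1 (x, t) := by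
    intro x
    have : (fun t : ℝ => {p : α × ℝ | ENNReal.ofReal p.2 < f p.1}.indicator (1 : α × ℝ → ℝ≥0∞) (x, t))
        = {t : ℝ | ENNReal.ofReal t < f x}.indicator 1 := by
      ext t; simp [Set.indicator]
    rw [this, lintegral_indicator_one (measurableSet_lt (by fun_prop) (by fun_prop)),
      Measure.restrict_apply (measurableSet_lt (by fun_prop) (by fun_prop))]
    have hfin : min (f x) 1 ≠ ∞ := ne_top_of_le_ne_top ENNReal.one_ne_top (min_le_right _ _)
    have : {t : ℝ | ENNReal.ofReal t < f x} ∩ Set.Ioo 0 1 =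
        Set.Ioo 0 (min (f x) 1).toReal := by
      ext t
      simp only [Set.mem_inter_iff, Set.mem_ofPred_eq, Set.mem_Ioo]
      constructor
      · rintro ⟨h, h0, h1⟩
        refine ⟨h0, (ENNReal.ofReal_lt_iff_lt_toReal h0.le hfin).1 (lt_min h ?_)⟩
        simpa using h1
      · rintro ⟨h0, h⟩
        have := lt_min_iff.1 ((ENNReal.ofReal_lt_iff_lt_toReal h0.le hfin).2 h)
        exact ⟨this.1, h0, by simpa using this.2⟩
    rw [this, Real.volume_Ioo, sub_zero, ENNReal.ofReal_toReal hfin]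
  simp_rw [h1]
  rw [lintegral_lintegral_swap]
  · refine lintegral_congr fun t => ?_
    have : (fun x : α => {p : α × ℝ | ENNReal.ofReal p.2 < f p.1}.indicator (1 : α × ℝ → ℝ≥0∞) (x, t))
        = {x : α | ENNReal.ofReal t < f x}.indicator 1 := by
      ext x; simp [Set.indicator]
    rw [this, lintegral_indicator_one (measurableSet_lt (by fun_prop) (by fun_prop))]
  · exact (measurable_one.indicator hS).aemeasurable

theorem ENNReal.geom_mean_le_arith_mean2_weighted {a b : ℝ} (ha : 0 < a) (hb : 0 < b)
    (hab : a + b = 1) (x y : ℝ≥0∞) :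
    x ^ a * y ^ b ≤ ENNReal.ofReal a * x + ENNReal.ofReal b * y := by
  rcases eq_or_ne x ∞ with rfl | hx
  · simp [ENNReal.mul_top, ha]
  rcases eq_or_ne y ∞ with rfl | hy
  · simp [ENNReal.mul_top, hb]
  lift x to NNReal using hx
  lift y to NNReal using hy
  have := NNReal.geom_mean_le_arith_mean2_weighted a.toNNReal b.toNNReal x y (by
    rw [← Real.toNNReal_add ha.le hb.le, hab, Real.toNNReal_one])
  rw [Real.coe_toNNReal _ ha.le, Real.coe_toNNReal _ hb.le] at this
  rw [← ENNReal.coe_rpow_of_nonneg _ ha.le, ← ENNReal.coe_rpow_of_nonneg _ hb.le]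
  simp only [ENNReal.ofReal]
  exact_mod_cast this

/-- Prékopa–Leindler on the line for functions with supremum one. -/
theorem lintegral_add_lintegral_le_of_iSup_eq_one {a b : ℝ} (ha : 0 < a) (hb : 0 < b)
    (hab : a + b = 1) {f g h : ℝ → ℝ≥0∞} (hf : Measurable f) (hg : Measurable g)
    (hh : Measurable h) (hf1 : ⨆ x, f x = 1) (hg1 : ⨆ x, g x = 1)
    (H : ∀ x y, f x ^ a * g y ^ b ≤ h (a • x + b • y)) :
    ENNReal.ofReal a * (∫⁻ x, f x) + ENNReal.ofReal b * ∫⁻ x, g x ≤ ∫⁻ x, h x := by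
  have hf' : ∫⁻ x, f x = ∫⁻ t in Set.Ioo (0 : ℝ) 1, volume {x | ENNReal.ofReal t < f x} := by
    rw [← lintegral_min_one_eq_lintegral_measure_lt _ hf]
    exact lintegral_congr fun x => (min_eq_left (hf1 ▸ le_iSup f x)).symm
  have hg' : ∫⁻ x, g x = ∫⁻ t in Set.Ioo (0 : ℝ) 1, volume {x | ENNReal.ofReal t < g x} := by
    rw [← lintegral_min_one_eq_lintegral_measure_lt _ hg]
    exact lintegral_congr fun x => (min_eq_left (hg1 ▸ le_iSup g x)).symm
  have hmeas : ∀ u : ℝ → ℝ≥0∞, Measurable fun t : ℝ => volume {x | ENNReal.ofReal t < u x} := by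
    intro u
    refine Antitone.measurable fun s t hst => measure_mono fun x hx => ?_
    exact (ENNReal.ofReal_le_ofReal hst).trans_lt hx
  calc _ = ∫⁻ t in Set.Ioo (0 : ℝ) 1, (ENNReal.ofReal a * volume {x | ENNReal.ofReal t < f x} +
          ENNReal.ofReal b * volume {x | ENNReal.ofReal t < g x}) := by
        rw [hf', hg', lintegral_add_left ((hmeas f).const_mul _),
          lintegral_const_mul _ (hmeas f), lintegral_const_mul _ (hmeas g)]
    _ ≤ ∫⁻ t in Set.Ioo (0 : ℝ) 1, volume {x | ENNReal.ofReal t < h x} := by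
        refine setLIntegral_mono (hmeas h) fun t ht => ?_
        have ht1 : ENNReal.ofReal t < 1 := by simpa using ht.2
        obtain ⟨x₀, hx₀⟩ := lt_iSup_iff.1 (hf1 ▸ ht1)
        obtain ⟨y₀, hy₀⟩ := lt_iSup_iff.1 (hg1 ▸ ht1)
        have hmf : MeasurableSet {x | ENNReal.ofReal t < f x} :=
          measurableSet_lt (by fun_prop) hf
        have hmg : MeasurableSet {x | ENNReal.ofReal t < g x} :=
          measurableSet_lt (by fun_prop) hg
        have key := MeasurableSet.volume_add_volume_le_volume_add
          (hmf.const_smul₀ a) (hmg.const_smul₀ b) ⟨a • x₀, Set.smul_mem_smul_set hx₀⟩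
            ⟨b • y₀, Set.smul_mem_smul_set hy₀⟩
        simp only [Measure.addHaar_smul, Module.finrank_self, pow_one, abs_of_pos ha,
          abs_of_pos hb] at key
        refine key.trans (measure_mono ?_)
        rintro _ ⟨_, ⟨x, hx, rfl⟩, _, ⟨y, hy, rfl⟩, rfl⟩
        refine lt_of_lt_of_le ?_ (H x y)
        calc ENNReal.ofReal t = ENNReal.ofReal t ^ a * ENNReal.ofReal t ^ b := by
              rw [← ENNReal.rpow_add_of_nonneg _ _ ha.le hb.le, hab, ENNReal.rpow_one]
          _ < _ := ENNReal.mul_lt_mul (ENNReal.rpow_lt_rpow hx ha) (ENNReal.rpow_lt_rpow hy hb)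
    _ = ∫⁻ x, min (h x) 1 := (lintegral_min_one_eq_lintegral_measure_lt _ hh).symm
    _ ≤ _ := lintegral_mono fun x => min_le_left _ _

/-- A measure satisfies the Prékopa–Leindler inequality. -/
def IsPrekopaLeindler {E : Type*} [AddCommGroup E] [Module ℝ E] [MeasurableSpace E]
    (μ : Measure E) : Prop :=
  ∀ a b : ℝ, 0 < a → 0 < b → a + b = 1 → ∀ f g h : E → ℝ≥0∞,
    Measurable f → Measurable g → Measurable h →
    (∀ x y, f x ^ a * g y ^ b ≤ h (a • x + b • y)) →
    (∫⁻ x, f x ∂μ) ^ a * (∫⁻ x, g x ∂μ) ^ b ≤ ∫⁻ x, h x ∂μ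

theorem lintegral_rpow_mul_lintegral_rpow_le_of_iSup_ne_top {a b : ℝ} (ha : 0 < a) (hb : 0 < b)
    (hab : a + b = 1) {f g h : ℝ → ℝ≥0∞} (hf : Measurable f) (hg : Measurable g)
    (hh : Measurable h) (hf1 : ⨆ x, f x ≠ ∞) (hg1 : ⨆ x, g x ≠ ∞)
    (H : ∀ x y, f x ^ a * g y ^ b ≤ h (a • x + b • y)) :
    (∫⁻ x, f x) ^ a * (∫⁻ x, g x) ^ b ≤ ∫⁻ x, h x := by
  set F := ⨆ x, f x with hF
  set G := ⨆ x, g x with hG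
  rcases eq_or_ne F 0 with hF0 | hF0
  · have : ∀ x, f x = 0 := fun x => ENNReal.iSup_eq_zero.1 (hF ▸ hF0) x
    simp [this, ha]
  rcases eq_or_ne G 0 with hG0 | hG0
  · have : ∀ x, g x = 0 := fun x => ENNReal.iSup_eq_zero.1 (hG ▸ hG0) x
    simp [this, hb]
  set c := F⁻¹ ^ a * G⁻¹ ^ b with hc
  have hcmul : ∀ u v : ℝ≥0∞, (F⁻¹ * u) ^ a * (G⁻¹ * v) ^ b = c * (u ^ a * v ^ b) := by
    intro u v
    rw [ENNReal.mul_rpow_of_nonneg _ _ ha.le, ENNReal.mul_rpow_of_nonneg _ _ hb.le, hc]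
    ring
  have hc0 : c ≠ 0 := mul_ne_zero
    (ENNReal.rpow_pos (ENNReal.inv_pos.2 hf1) (ENNReal.inv_ne_top.2 hF0)).ne'
    (ENNReal.rpow_pos (ENNReal.inv_pos.2 hg1) (ENNReal.inv_ne_top.2 hG0)).ne'
  have hct : c ≠ ∞ := ENNReal.mul_ne_top
    (ENNReal.rpow_ne_top_of_nonneg ha.le (ENNReal.inv_ne_top.2 hF0))
    (ENNReal.rpow_ne_top_of_nonneg hb.le (ENNReal.inv_ne_top.2 hG0))
  have key := lintegral_add_lintegral_le_of_iSup_eq_one ha hb hab (hf.const_mul F⁻¹)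
    (hg.const_mul G⁻¹) (hh.const_mul c)
    (by rw [← ENNReal.mul_iSup, ENNReal.inv_mul_cancel hF0 hf1])
    (by rw [← ENNReal.mul_iSup, ENNReal.inv_mul_cancel hG0 hg1])
    (fun x y => by rw [hcmul]; gcongr; exact H x y)
  have key' := (ENNReal.geom_mean_le_arith_mean2_weighted ha hb hab _ _).trans key
  rw [lintegral_const_mul _ hf, lintegral_const_mul _ hg, lintegral_const_mul _ hh, hcmul] at key'
  exact (ENNReal.mul_le_mul_iff_right hc0 hct).1 key'

theorem isPrekopaLeindler_volume_real : IsPrekopaLeindler (volume : Measure ℝ) := by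
  intro a b ha hb hab f g h hf hg hh H
  have htr : ∀ u : ℝ → ℝ≥0∞, Measurable u →
      ∫⁻ x, u x = ⨆ n : ℕ, ∫⁻ x, min (u x) n := by
    intro u hu
    rw [← lintegral_iSup (fun n => hu.min measurable_const)
      fun m n hmn x => min_le_min_left _ (by exact_mod_cast hmn)]
    refine lintegral_congr fun x => ?_
    rw [← inf_iSup_eq, ENNReal.iSup_natCast, inf_top_eq]
  have hsup : ∀ (u : ℝ → ℝ≥0∞) (n : ℕ), ⨆ x, min (u x) n ≠ ∞ := fun u n =>
    ne_top_of_le_ne_top (ENNReal.natCast_ne_top n) (iSup_le fun x => min_le_right _ _)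
  have hpow : ∀ (r : ℝ), 0 < r → ∀ u : ℕ → ℝ≥0∞, (⨆ n, u n) ^ r = ⨆ n, u n ^ r :=
    fun r hr u => (ENNReal.orderIsoRpow r hr).map_iSup u
  rw [htr f hf, htr g hg, hpow a ha, hpow b hb]
  simp only [ENNReal.iSup_mul, ENNReal.mul_iSup, iSup_le_iff]
  intro m n
  refine lintegral_rpow_mul_lintegral_rpow_le_of_iSup_ne_top ha hb hab
    (hf.min measurable_const) (hg.min measurable_const) hh (hsup f _) (hsup g _) fun x y => ?_
  refine le_trans ?_ (H x y)
  gcongr <;> exact min_le_left _ _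

theorem IsPrekopaLeindler.prod {E F : Type*} [AddCommGroup E] [Module ℝ E] [MeasurableSpace E]
    [AddCommGroup F] [Module ℝ F] [MeasurableSpace F] {μ : Measure E} {ν : Measure F} [SFinite ν]
    (hμ : IsPrekopaLeindler μ) (hν : IsPrekopaLeindler ν) : IsPrekopaLeindler (μ.prod ν) := by
  intro a b ha hb hab f g h hf hg hh H
  rw [lintegral_prod _ hf.aemeasurable, lintegral_prod _ hg.aemeasurable,
    lintegral_prod _ hh.aemeasurable]
  refine hμ a b ha hb hab _ _ _ hf.lintegral_prod_right' hg.lintegral_prod_right'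
    hh.lintegral_prod_right' fun x y => ?_
  exact hν a b ha hb hab _ _ _ (hf.comp measurable_prodMk_left) (hg.comp measurable_prodMk_left)
    (hh.comp measurable_prodMk_left) fun x' y' => H (x, x') (y, y')

theorem IsPrekopaLeindler.of_measurePreserving {E F : Type*} [AddCommGroup E] [Module ℝ E]
    [MeasurableSpace E] [AddCommGroup F] [Module ℝ F] [MeasurableSpace F] {μ : Measure E}
    {ν : Measure F} (hμ : IsPrekopaLeindler μ) (e : E →ₗ[ℝ] F) (he : MeasurePreserving e μ ν) :
    IsPrekopaLeindler ν := by
  intro a b ha hb hab f g h hf hg hh H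
  rw [← he.lintegral_comp hf, ← he.lintegral_comp hg, ← he.lintegral_comp hh]
  refine hμ a b ha hb hab _ _ _ (hf.comp he.measurable) (hg.comp he.measurable)
    (hh.comp he.measurable) fun x y => ?_
  simpa using H (e x) (e y)

theorem isPrekopaLeindler_volume_pi (n : ℕ) :
    IsPrekopaLeindler (volume : Measure (Fin n → ℝ)) := by
  induction n with
  | zero =>
    intro a b ha hb hab f g h hf hg hh H
    simp only [volume_pi, Measure.pi_of_empty _ (0 : Fin 0 → ℝ), lintegral_dirac]
    simpa using H 0 0
  | succ n ih =>
    refine (isPrekopaLeindler_volume_real.prod ih).of_measurePreserving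
      (Fin.consLinearEquiv ℝ fun _ : Fin (n + 1) => ℝ).toLinearMap ?_
    have := (volume_preserving_piFinSuccAbove (fun _ : Fin (n + 1) => ℝ) 0).symm
    have hcoe : ⇑(Fin.consLinearEquiv ℝ fun _ : Fin (n + 1) => ℝ).toLinearMap =
        (MeasurableEquiv.piFinSuccAbove (fun _ : Fin (n + 1) => ℝ) 0).symm := by
      funext p i
      refine Fin.cases ?_ (fun j => ?_) i <;> simp
    rw [hcoe]
    exact this

theorem isPrekopaLeindler_volume_euclideanSpace (n : ℕ) :
    IsPrekopaLeindler (volume : Measure (EuclideanSpace ℝ (Fin n))) :=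
  (isPrekopaLeindler_volume_pi n).of_measurePreserving
    (WithLp.linearEquiv 2 ℝ (Fin n → ℝ)).symm.toLinearMap
    (PiLp.volume_preserving_toLp (Fin n))

/-- The Brunn–Minkowski inequality for compact sets of positive volume. -/
theorem IsCompact.rpow_add_rpow_pow_le_volume_add {n : ℕ} (hn : n ≠ 0)
    {A B : Set (EuclideanSpace ℝ (Fin n))} (hA : IsCompact A) (hB : IsCompact B)
    (hA0 : 0 < volume A) (hB0 : 0 < volume B) :
    ((volume A).toReal ^ ((1 : ℝ) / n) + (volume B).toReal ^ ((1 : ℝ) / n)) ^ n ≤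
      (volume (A + B)).toReal := by
  set k := (volume A).toReal ^ ((1 : ℝ) / n) with hk
  set t := (volume B).toReal ^ ((1 : ℝ) / n) with ht
  have hApos : 0 < (volume A).toReal := ENNReal.toReal_pos hA0.ne' hA.measure_lt_top.ne
  have hBpos : 0 < (volume B).toReal := ENNReal.toReal_pos hB0.ne' hB.measure_lt_top.ne
  have hk0 : 0 < k := Real.rpow_pos_of_pos hApos _
  have ht0 : 0 < t := Real.rpow_pos_of_pos hBpos _
  have hkn : k ^ n = (volume A).toReal := by
    rw [hk, one_div, Real.rpow_inv_natCast_pow hApos.le hn]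
  have htn : t ^ n = (volume B).toReal := by
    rw [ht, one_div, Real.rpow_inv_natCast_pow hBpos.le hn]
  have hs : 0 < k + t := by positivity
  have hscale : ∀ (S : Set (EuclideanSpace ℝ (Fin n))) (r : ℝ), 0 < r →
      volume (r⁻¹ • S) = ENNReal.ofReal ((r ^ n)⁻¹) * volume S := by
    intro S r hr
    rw [Measure.addHaar_smul, finrank_euclideanSpace_fin, abs_of_pos (by positivity), inv_pow]
  have hone : ∀ (S : Set (EuclideanSpace ℝ (Fin n))) (r : ℝ), 0 < r → IsCompact S →
      r ^ n = (volume S).toReal → volume (r⁻¹ • S) = 1 := by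
    intro S r hr hS hrS
    rw [hscale S r hr, ← ENNReal.ofReal_toReal hS.measure_lt_top.ne, ← hrS,
      ← ENNReal.ofReal_mul (by positivity), inv_mul_cancel₀ (by positivity), ENNReal.ofReal_one]
  have hAB : IsCompact (A + B) := hA.add hB
  have hmA : MeasurableSet (k⁻¹ • A) := hA.measurableSet.const_smul₀ _
  have hmB : MeasurableSet (t⁻¹ • B) := hB.measurableSet.const_smul₀ _
  have hmC : MeasurableSet ((k + t)⁻¹ • (A + B)) := hAB.measurableSet.const_smul₀ _
  have key := isPrekopaLeindler_volume_euclideanSpace n (k / (k + t)) (t / (k + t))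
    (by positivity) (by positivity) (by field_simp)
    ((k⁻¹ • A).indicator 1) ((t⁻¹ • B).indicator 1) (((k + t)⁻¹ • (A + B)).indicator 1)
    (measurable_one.indicator hmA) (measurable_one.indicator hmB) (measurable_one.indicator hmC) (by
      intro x y
      by_cases hx : x ∈ k⁻¹ • A
      · by_cases hy : y ∈ t⁻¹ • B
        · have : (k / (k + t)) • x + (t / (k + t)) • y ∈ (k + t)⁻¹ • (A + B) := by
            obtain ⟨u, hu, rfl⟩ := hx
            obtain ⟨v, hv, rfl⟩ := hy
            refine ⟨u + v, Set.add_mem_add hu hv, ?_⟩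
            simp only [smul_smul, smul_add]
            congr 2 <;> field_simp
          rw [Set.indicator_of_mem hx, Set.indicator_of_mem hy, Set.indicator_of_mem this]
          simp
        · rw [Set.indicator_of_notMem hy, ENNReal.zero_rpow_of_pos (by positivity), mul_zero]
          exact zero_le
      · rw [Set.indicator_of_notMem hx, ENNReal.zero_rpow_of_pos (by positivity), zero_mul]
        exact zero_le)
  rw [lintegral_indicator_one hmA, lintegral_indicator_one hmB, lintegral_indicator_one hmC,
    hone A k hk0 hA hkn, hone B t ht0 hB htn, ENNReal.one_rpow, ENNReal.one_rpow, one_mul,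
    hscale _ _ hs, ← ENNReal.ofReal_toReal hAB.measure_lt_top.ne,
    ← ENNReal.ofReal_mul (by positivity), ENNReal.one_le_ofReal, ← div_eq_inv_mul,
    one_le_div (by positivity)] at key
  exact key

/-- Two compact sets with nonempty connected boundaries that do not meet are nested or disjoint. -/
theorem subset_or_subset_or_disjoint_of_disjoint_frontier {X : Type*} [TopologicalSpace X]
    [T2Space X] [PreconnectedSpace X] [NoncompactSpace X] {K T : Set X} (hK : IsCompact K)
    (hT : IsCompact T) (hK' : IsConnected (frontier K)) (hT' : IsConnected (frontier T))
    (hd : Disjoint (frontier K) (frontier T)) : T ⊆ K ∨ K ⊆ T ∨ Disjoint K T := by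
  have dich : ∀ {K T : Set X}, IsCompact K → IsConnected (frontier T) →
      Disjoint (frontier K) (frontier T) → frontier T ⊆ interior K ∨ frontier T ⊆ Kᶜ := by
    intro K T hK hT' hd
    refine hT'.isPreconnected.subset_or_subset isOpen_interior hK.isClosed.isOpen_compl
      (disjoint_compl_right.mono_left interior_subset) fun x hx => ?_
    by_cases hxK : x ∈ K
    · by_contra h
      exact hd.notMem_of_mem_right hx ⟨subset_closure hxK, fun hi => h (Or.inl hi)⟩
    · exact Or.inr hxK
  have clopen : ∀ {S C : Set X}, IsCompact C → S ⊆ C → frontier S = ∅ → S = ∅ := by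
    intro S C hC hSC hS
    rcases isClopen_iff.1 (isClopen_iff_frontier_eq_empty.2 hS) with h | h
    · exact h
    · exact absurd (Set.univ_subset_iff.1 (h ▸ hSC) ▸ hC) (noncompact_univ X)
  have nested : ∀ {K T : Set X}, IsCompact T → frontier T ⊆ interior K →
      frontier K ⊆ Tᶜ → T ⊆ K := by
    intro K T hT h1 h2
    have := clopen (S := T ∩ Kᶜ) hT Set.inter_subset_left (by
      rw [← Set.subset_empty_iff]
      refine (frontier_inter_subset _ _).trans ?_
      rintro x (⟨hx, hx'⟩ | ⟨hx, hx'⟩)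
      · rw [closure_compl] at hx'
        exact hx' (h1 hx)
      · rw [frontier_compl] at hx'
        exact h2 hx' (hT.isClosed.closure_eq ▸ hx))
    intro x hx
    by_contra hxK
    exact (this ▸ (⟨hx, hxK⟩ : x ∈ T ∩ Kᶜ) : x ∈ (∅ : Set X))
  rcases dich hK hT' hd with h1 | h1 <;> rcases dich hT hK' hd.symm with h2 | h2
  · have := clopen (S := K ∪ T) (hK.union hT) subset_rfl (by
      rw [← Set.subset_empty_iff]
      refine (frontier_union_subset _ _).trans ?_
      rw [closure_compl, closure_compl]
      rintro x (⟨hx, hx'⟩ | ⟨hx, hx'⟩)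
      · exact hx' (h2 hx)
      · exact hx (h1 hx'))
    exact Or.inr (Or.inl fun x hx => (this ▸ Or.inl hx : x ∈ (∅ : Set X)).elim)
  · exact Or.inl (nested hT h1 h2)
  · exact Or.inr (Or.inl (nested hK h2 h1))
  · right; right
    rw [Set.disjoint_iff_inter_eq_empty]
    refine clopen hK Set.inter_subset_left ?_
    rw [← Set.subset_empty_iff]
    refine (frontier_inter_subset _ _).trans ?_
    rintro x (⟨hx, hx'⟩ | ⟨hx, hx'⟩)
    · exact h2 hx (hT.isClosed.closure_eq ▸ hx')
    · exact h1 hx' (hK.isClosed.closure_eq ▸ hx)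

theorem volume_add_le_volume_frontier_add {E : Type*} [NormedAddCommGroup E] [NormedSpace ℝ E]
    [NoncompactSpace E] [MeasurableSpace E] [BorelSpace E] (μ : Measure E)
    [μ.IsAddLeftInvariant] {K T : Set E} (hK : IsCompact K) (hT : IsCompact T)
    (hK' : IsConnected (frontier K)) (hT' : IsConnected (frontier T)) :
    μ (K + T) ≤ μ (frontier K + frontier T) + μ K + μ T := by
  obtain ⟨k₀, hk₀⟩ := hK'.nonempty
  obtain ⟨t₀, ht₀⟩ := hT'.nonempty
  have hk₀K : k₀ ∈ K := hK.isClosed.frontier_subset hk₀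
  have ht₀T : t₀ ∈ T := hT.isClosed.frontier_subset ht₀
  have hsub : K + T ⊆ (frontier K + frontier T) ∪ (fun x => t₀ + x) '' K ∪
      (fun x => k₀ + x) '' T := by
    rintro _ ⟨p, hp, q, hq, rfl⟩
    by_contra hx
    simp only [Set.mem_union, not_or] at hx
    obtain ⟨⟨hx1, hx2⟩, hx3⟩ := hx
    set x := p + q with hxdef
    set T' := Homeomorph.subLeft x ⁻¹' T with hT'def
    have hmem : ∀ z, z ∈ T' ↔ x - z ∈ T := fun z => Iff.rfl
    have hfr : frontier T' = Homeomorph.subLeft x ⁻¹' frontier T :=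
      (Homeomorph.preimage_frontier _ _).symm
    have hT'c : IsCompact T' := (Homeomorph.isCompact_preimage _).2 hT
    have hT'f : IsConnected (frontier T') := by
      rw [hfr]; exact (Homeomorph.isConnected_preimage _).2 hT'
    have hdis : Disjoint (frontier K) (frontier T') := by
      rw [Set.disjoint_left]
      intro z hz hz'
      rw [hfr] at hz'
      exact hx1 ⟨z, hz, x - z, hz', add_sub_cancel _ _⟩
    rcases subset_or_subset_or_disjoint_of_disjoint_frontier hK hT'c hK' hT'f hdis with h | h | h
    · refine hx2 ⟨x - t₀, h ((hmem _).2 ?_), add_sub_cancel _ _⟩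
      rwa [sub_sub_cancel]
    · exact hx3 ⟨x - k₀, (hmem _).1 (h hk₀K), add_sub_cancel _ _⟩
    · refine Set.disjoint_left.1 h hp ((hmem _).2 ?_)
      rwa [hxdef, add_sub_cancel_left]
  calc μ (K + T) ≤ _ := measure_mono hsub
    _ ≤ _ := measure_union_le _ _
    _ ≤ _ := add_le_add_left (measure_union_le _ _) _
    _ = _ := by simp [Set.image_add_left, measure_preimage_add]

theorem three_mul_add_sq_rpow_le {n : ℕ} (hn : 2 ≤ n) {k t : ℝ} (hk : 0 < k) (ht : 0 < t)
    (h1 : k / t ≤ √n / 4) (h2 : t / k ≤ √n / 4) :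
    3 * (k ^ 2 + t ^ 2) ^ ((n : ℝ) / 2) ≤ (k + t) ^ n := by
  have hn' : (2 : ℝ) ≤ n := by exact_mod_cast hn
  have hsn : 0 < √(n : ℝ) := Real.sqrt_pos.2 (by linarith)
  have hsq : √(n : ℝ) * √n = n := Real.mul_self_sqrt (by linarith)
  have hQ : 0 < k ^ 2 + t ^ 2 := by positivity
  set s := 2 * k * t / (k ^ 2 + t ^ 2) with hs
  have hs4 : 4 / √n ≤ s := by
    have : (k ^ 2 + t ^ 2) / (k * t) ≤ √n / 2 := by
      have : (k ^ 2 + t ^ 2) / (k * t) = k / t + t / k := by field_simp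
      linarith
    rw [div_le_iff₀ (by positivity)] at this
    rw [hs, div_le_div_iff₀ hsn hQ]
    nlinarith
  have hs0 : 0 < s := by positivity
  have hkt : (k + t) ^ 2 = (k ^ 2 + t ^ 2) * (1 + s) := by
    rw [hs]; field_simp; ring
  have hpow : (k + t) ^ n = ((k + t) ^ 2) ^ ((n : ℝ) / 2) := by
    rw [← Real.rpow_natCast (k + t) 2, ← Real.rpow_mul (by positivity), ← Real.rpow_natCast]
    congr 1; push_cast; ring
  have hb : 1 + (n : ℝ) / 2 * s ≤ (1 + s) ^ ((n : ℝ) / 2) :=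
    one_add_mul_self_le_rpow_one_add (by linarith) (by linarith)
  have hns : 2 ≤ (n : ℝ) / 2 * s := by
    have h1n : 1 ≤ √(n : ℝ) := Real.one_le_sqrt.2 (by linarith)
    have : (n : ℝ) / 2 * (4 / √n) = 2 * √n := by
      rw [div_mul_div_comm, div_eq_iff (by positivity)]; linear_combination -4 * hsq
    nlinarith
  rw [hpow, hkt, Real.mul_rpow hQ.le (by linarith), mul_comm]
  gcongr
  linarith

theorem restricted_BM_for_boundaries :
    ∃ C : ℝ, 0 < C ∧ ∀ n : ℕ, 2 ≤ n →
      ∀ K T : Set (EuclideanSpace ℝ (Fin n)),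
        IsCompact K → IsCompact T →
        IsConnected (frontier K) → IsConnected (frontier T) →
        0 < volume K → 0 < volume T →
        C / Real.sqrt n ≤ ((volume K).toReal / (volume T).toReal) ^ ((1 : ℝ) / n) →
        ((volume K).toReal / (volume T).toReal) ^ ((1 : ℝ) / n) ≤ Real.sqrt n / C →
        (volume (frontier K + frontier T)).toReal ^ ((2 : ℝ) / n) ≥
          (volume K).toReal ^ ((2 : ℝ) / n) + (volume T).toReal ^ ((2 : ℝ) / n) := by
  refine ⟨4, by norm_num, fun n hn K T hK hT hK' hT' hK0 hT0 h1 h2 => ?_⟩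
  have hn0 : n ≠ 0 := by omega
  have hnR : (0 : ℝ) < n := by positivity
  have : Nonempty (Fin n) := ⟨⟨0, by omega⟩⟩
  have : NoncompactSpace (EuclideanSpace ℝ (Fin n)) := NormedSpace.noncompactSpace ℝ _
  have hBM := hK.rpow_add_rpow_pow_le_volume_add hn0 hT hK0 hT0
  have hKpos : 0 < (volume K).toReal := ENNReal.toReal_pos hK0.ne' hK.measure_lt_top.ne
  have hTpos : 0 < (volume T).toReal := ENNReal.toReal_pos hT0.ne' hT.measure_lt_top.ne
  have hfin : volume (frontier K + frontier T) ≠ ⊤ :=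
    ((hK.of_isClosed_subset isClosed_frontier hK.isClosed.frontier_subset).add
      (hT.of_isClosed_subset isClosed_frontier hT.isClosed.frontier_subset)).measure_lt_top.ne
  have hvol : (volume (K + T)).toReal ≤
      (volume (frontier K + frontier T)).toReal + (volume K).toReal + (volume T).toReal := by
    rw [← ENNReal.toReal_add hfin hK.measure_lt_top.ne,
      ← ENNReal.toReal_add (ENNReal.add_ne_top.2 ⟨hfin, hK.measure_lt_top.ne⟩)
        hT.measure_lt_top.ne]
    exact ENNReal.toReal_mono (ENNReal.add_ne_top.2 ⟨ENNReal.add_ne_top.2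
      ⟨hfin, hK.measure_lt_top.ne⟩, hT.measure_lt_top.ne⟩)
      (volume_add_le_volume_frontier_add volume hK hT hK' hT')
  rw [Real.div_rpow hKpos.le hTpos.le] at h1 h2
  have hsq : ∀ v : ℝ, 0 < v → v ^ ((2 : ℝ) / n) = (v ^ ((1 : ℝ) / n)) ^ 2 := by
    intro v hv
    rw [← Real.rpow_natCast, ← Real.rpow_mul hv.le]
    congr 1; push_cast; ring
  have hle : ∀ v q : ℝ, 0 < v → (v ^ ((1 : ℝ) / n)) ^ 2 ≤ q → v ≤ q ^ ((n : ℝ) / 2) := by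
    intro v q hv hq
    rw [← hsq v hv] at hq
    have := Real.rpow_le_rpow (by positivity) hq (by positivity : (0 : ℝ) ≤ (n : ℝ) / 2)
    rwa [← Real.rpow_mul hv.le, show (2 : ℝ) / n * (n / 2) = 1 by field_simp,
      Real.rpow_one] at this
  rw [hsq _ hKpos, hsq _ hTpos]
  have hKle := hle _ (((volume K).toReal ^ ((1 : ℝ) / n)) ^ 2 +
    ((volume T).toReal ^ ((1 : ℝ) / n)) ^ 2) hKpos (le_add_of_nonneg_right (by positivity))
  have hTle := hle _ (((volume K).toReal ^ ((1 : ℝ) / n)) ^ 2 +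
    ((volume T).toReal ^ ((1 : ℝ) / n)) ^ 2) hTpos (le_add_of_nonneg_left (by positivity))
  set k := (volume K).toReal ^ ((1 : ℝ) / n) with hk
  set t := (volume T).toReal ^ ((1 : ℝ) / n) with ht
  have hk0 : 0 < k := Real.rpow_pos_of_pos hKpos _
  have ht0 : 0 < t := Real.rpow_pos_of_pos hTpos _
  have hsn : 0 < √(n : ℝ) := Real.sqrt_pos.2 hnR
  have h3 := three_mul_add_sq_rpow_le hn hk0 ht0 h2 (by
    rw [div_le_div_iff₀ hsn ht0] at h1
    rw [div_le_div_iff₀ hk0 (by norm_num)]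
    linarith)
  have hfinal : (k ^ 2 + t ^ 2) ^ ((n : ℝ) / 2) ≤
      (volume (frontier K + frontier T)).toReal := by linarith
  have := Real.rpow_le_rpow (by positivity) hfinal (by positivity : (0 : ℝ) ≤ (2 : ℝ) / n)
  rwa [← Real.rpow_mul (by positivity), show (n : ℝ) / 2 * (2 / n) = 1 by field_simp,
    Real.rpow_one] at this
end
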